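/- arXiv:quant-ph/0505038 — 2 statements merged into one kernel-verified Lean document; each statement's English description precedes it below -/
import Mathlib

section
/- Monotonicity of the Holevo information under partial trace: let (q_j)_{j=1}^m be a probability distribution and ρ_1,…,ρ_m density matrices with rows and columns indexed by Fin dA × Fin dB. Then S(∑_j q_j ρ_j) − ∑_j q_j S(ρ_j) ≥ S(∑_j q_j tr_B ρ_j) − ∑_j q_j S(tr_B ρ_j); that is, the Holevo information of the ensemble {(q_j, ρ_j)} is at least the Holevo information of the partially traced ensemble {(q_j, tr_B ρ_j)}. -/
open scoped ComplexConjugate ComplexOrder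

/-- A density matrix: positive semidefinite with trace one. -/
def IsDensityMatrix {n : Type*} [Fintype n] (ρ : Matrix n n ℂ) : Prop :=
  ρ.PosSemidef ∧ ρ.trace = 1

/-- The von Neumann entropy (in bits) of a (Hermitian) matrix:
`S(ρ) = −∑ᵢ λᵢ log₂ λᵢ` over the eigenvalues, with `0·log₂ 0 = 0`. -/
noncomputable def vnEntropy {n : Type*} [Fintype n] [DecidableEq n]
    (ρ : Matrix n n ℂ) : ℝ :=
  if h : ρ.IsHermitian then -∑ i, h.eigenvalues i * Real.logb 2 (h.eigenvalues i) else 0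

/-- The trace norm of a Hermitian matrix: the sum of the absolute values of
its eigenvalues. -/
noncomputable def traceNorm {n : Type*} [Fintype n] [DecidableEq n]
    (M : Matrix n n ℂ) : ℝ :=
  if h : M.IsHermitian then ∑ i, |h.eigenvalues i| else 0

/-- Partial trace over the second (B) system. -/
noncomputable def ptraceB {dA dB : ℕ}
    (ρ : Matrix (Fin dA × Fin dB) (Fin dA × Fin dB) ℂ) :
    Matrix (Fin dA) (Fin dA) ℂ :=
  Matrix.of fun i i' => ∑ k, ρ (i, k) (i', k)

open Matrix

/-!
The Holevo information is the average relative entropy of the members of the ensemble to the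
ensemble average, so it suffices that `D(ρ‖σ) = tr ρ (log ρ - log σ)` decreases under a channel
when the kernel of `σ` is contained in that of `ρ`. In terms of the eigenpairs `(pᵢ, uᵢ)` of `ρ` and
`(sₖ, vₖ)` of `σ`, with `wᵢₖ = |⟨vₖ, uᵢ⟩|²`,
`D(ρ‖σ) = ∑ᵢₖ wᵢₖ pᵢ (log pᵢ - log sₖ) = ∫₀¹ (F t - tr ρ) / (1 - t) dt`, where
`F t = ∑ᵢₖ wᵢₖ pᵢ² / ((1 - t) sₖ + t pᵢ)`. Completing squares, `F t` is the maximum over all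
matrices `X` of `2 Re tr (X† ρ) - (1 - t) tr (X X† σ) - t tr (X† X ρ)`. By the Kadison–Schwarz
inequality this expression can only increase when the channel is moved from `ρ` and `σ` onto `X`
by duality. Hence `F t` decreases under the channel for every `t`, and so does `D`.
-/

open scoped MatrixOrder in
theorem re_trace_mul_nonneg {n : Type*} [Fintype n] {A B : Matrix n n ℂ} (hA : A.PosSemidef)
    (hB : B.PosSemidef) : 0 ≤ (A * B).trace.re := by
  classical
  obtain ⟨C, rfl⟩ := CStarAlgebra.nonneg_iff_eq_star_mul_self.mp hA.nonneg
  rw [star_eq_conjTranspose, Matrix.mul_assoc, trace_mul_comm]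
  exact (Complex.nonneg_iff.1 (hB.mul_mul_conjTranspose_same C).trace_nonneg).1

theorem mulVec_eq_zero_of_sum_mulVec_eq_zero {ι n : Type*} [Fintype ι] [Fintype n]
    {A : ι → Matrix n n ℂ} (hA : ∀ i, (A i).PosSemidef) {x : n → ℂ} (hx : (∑ i, A i) *ᵥ x = 0)
    (i : ι) : A i *ᵥ x = 0 := by
  have form_sum : ∑ i, star x ⬝ᵥ A i *ᵥ x = 0 := by
    rw [← dotProduct_sum, ← sum_mulVec, hx, dotProduct_zero]
  exact ((hA i).dotProduct_mulVec_zero_iff x).1 <|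
    (Finset.sum_eq_zero_iff_of_nonneg fun i _ => (hA i).dotProduct_mulVec_nonneg x).1 form_sum i
      (Finset.mem_univ i)

section KrausMap

variable {κ m n : Type*} [Fintype κ] [Fintype m]

/-- The completely positive map `ρ ↦ ∑ₖ Kₖ ρ Kₖ†` with Kraus operators `K`. It is a quantum channel
when `∑ₖ Kₖ† Kₖ = 1`, and its dual for the trace pairing is the Kraus map of the adjoints `Kₖ†`. -/
def krausMap (K : κ → Matrix n m ℂ) : Matrix m m ℂ →ₗ[ℂ] Matrix n n ℂ where
  toFun ρ := ∑ k, K k * ρ * (K k)ᴴ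
  map_add' ρ σ := by simp only [Matrix.mul_add, Matrix.add_mul, Finset.sum_add_distrib]
  map_smul' c ρ := by simp [Finset.smul_sum]

theorem krausMap_apply (K : κ → Matrix n m ℂ) (ρ : Matrix m m ℂ) :
    krausMap K ρ = ∑ k, K k * ρ * (K k)ᴴ := rfl

theorem conjTranspose_krausMap (K : κ → Matrix n m ℂ) (ρ : Matrix m m ℂ) :
    (krausMap K ρ)ᴴ = krausMap K ρᴴ := by
  simp only [krausMap_apply, conjTranspose_sum, conjTranspose_mul, conjTranspose_conjTranspose,
    Matrix.mul_assoc]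

theorem posSemidef_krausMap [Finite n] (K : κ → Matrix n m ℂ) {ρ : Matrix m m ℂ}
    (hρ : ρ.PosSemidef) :
    (krausMap K ρ).PosSemidef :=
  posSemidef_sum _ fun k _ => hρ.mul_mul_conjTranspose_same (K k)

variable [Fintype n]

theorem trace_mul_krausMap (K : κ → Matrix n m ℂ) (X : Matrix n n ℂ) (ρ : Matrix m m ℂ) :
    (X * krausMap K ρ).trace = (krausMap (fun k => (K k)ᴴ) X * ρ).trace := by
  simp only [krausMap_apply, Matrix.mul_sum, Matrix.sum_mul, trace_sum, conjTranspose_conjTranspose]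
  refine Finset.sum_congr rfl fun k _ => ?_
  rw [← Matrix.mul_assoc, trace_mul_comm]
  simp only [Matrix.mul_assoc]

theorem krausMap_mulVec_eq_zero (K : κ → Matrix n m ℂ) {ρ σ : Matrix m m ℂ} (hσ : σ.PosSemidef)
    (hker : ∀ x, σ *ᵥ x = 0 → ρ *ᵥ x = 0) {y : n → ℂ} (hy : krausMap K σ *ᵥ y = 0) :
    krausMap K ρ *ᵥ y = 0 := by
  have σ_zero (k : κ) : σ *ᵥ (K k)ᴴ *ᵥ y = 0 := by
    have term_zero : (K k * σ * (K k)ᴴ) *ᵥ y = 0 :=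
      mulVec_eq_zero_of_sum_mulVec_eq_zero (fun k => hσ.mul_mul_conjTranspose_same (K k)) hy k
    rw [← hσ.dotProduct_mulVec_zero_iff, star_mulVec, conjTranspose_conjTranspose,
      ← dotProduct_mulVec, mulVec_mulVec, mulVec_mulVec, term_zero, dotProduct_zero]
  rw [krausMap_apply, sum_mulVec]
  refine Finset.sum_eq_zero fun k _ => ?_
  rw [← mulVec_mulVec, ← mulVec_mulVec, hker _ (σ_zero k), mulVec_zero]

variable [DecidableEq m]

theorem trace_krausMap {K : κ → Matrix n m ℂ} (hK : ∑ k, (K k)ᴴ * K k = 1) (ρ : Matrix m m ℂ) :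
    (krausMap K ρ).trace = ρ.trace := by
  classical
  have unital : krausMap (fun k => (K k)ᴴ) (1 : Matrix n n ℂ) = 1 := by
    simpa [krausMap_apply] using hK
  rw [← Matrix.one_mul (krausMap K ρ), trace_mul_krausMap, unital, Matrix.one_mul]

theorem posSemidef_krausMap_conjTranspose_mul_self_sub {K : κ → Matrix n m ℂ}
    (hK : ∑ k, (K k)ᴴ * K k = 1) (X : Matrix n n ℂ) :
    (krausMap (fun k => (K k)ᴴ) (Xᴴ * X) -
      (krausMap (fun k => (K k)ᴴ) X)ᴴ * krausMap (fun k => (K k)ᴴ) X).PosSemidef := by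
  set Y := krausMap (fun k => (K k)ᴴ) X with hY
  have sum_sq : krausMap (fun k => (K k)ᴴ) (Xᴴ * X) - Yᴴ * Y =
      ∑ k, (X * K k - K k * Y)ᴴ * (X * K k - K k * Y) := by
    have expand (k : κ) : (X * K k - K k * Y)ᴴ * (X * K k - K k * Y) =
        (K k)ᴴ * (Xᴴ * X) * K k - (K k)ᴴ * Xᴴ * K k * Y - Yᴴ * ((K k)ᴴ * X * K k)
          + Yᴴ * ((K k)ᴴ * K k) * Y := by
      simp only [conjTranspose_sub, conjTranspose_mul, Matrix.sub_mul, Matrix.mul_sub,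
        Matrix.mul_assoc]
      abel
    have hYH : ∑ k, (K k)ᴴ * Xᴴ * K k = Yᴴ := by
      rw [hY, conjTranspose_krausMap]; simp [krausMap_apply]
    simp only [expand, Finset.sum_add_distrib, Finset.sum_sub_distrib, ← Matrix.sum_mul,
      ← Matrix.mul_sum, hK, hYH]
    simp [hY, krausMap_apply]
  rw [sum_sq]
  exact posSemidef_sum _ fun k _ => posSemidef_conjTranspose_mul_self _

end KrausMap

section Spectral

variable {m n : Type*} [Fintype m] [Fintype n] [DecidableEq m] [DecidableEq n]

/-- The matrix of `X` from the eigenbasis of `A` to the eigenbasis of `B`. -/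
noncomputable def eigenMatrix {A : Matrix n n ℂ} {B : Matrix m m ℂ} (hA : A.IsHermitian)
    (hB : B.IsHermitian) (X : Matrix m n ℂ) : Matrix m n ℂ :=
  (hB.eigenvectorUnitary : Matrix m m ℂ)ᴴ * X * (hA.eigenvectorUnitary : Matrix n n ℂ)

theorem eigenMatrix_surjective {A : Matrix n n ℂ} {B : Matrix m m ℂ} (hA : A.IsHermitian)
    (hB : B.IsHermitian) : Function.Surjective (eigenMatrix hA hB) := by
  intro Y
  refine ⟨(hB.eigenvectorUnitary : Matrix m m ℂ) * Y * (hA.eigenvectorUnitary : Matrix n n ℂ)ᴴ, ?_⟩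
  have hU := Unitary.coe_star_mul_self hA.eigenvectorUnitary
  have hV := Unitary.coe_star_mul_self hB.eigenvectorUnitary
  rw [star_eq_conjTranspose] at hU hV
  simp only [eigenMatrix, Matrix.mul_assoc]
  rw [hU, ← Matrix.mul_assoc, hV, Matrix.one_mul, Matrix.mul_one]

theorem cfc_eq_eigenvectorUnitary_mul {A : Matrix n n ℂ} (hA : A.IsHermitian) (f : ℝ → ℝ) :
    cfc f A = hA.eigenvectorUnitary * diagonal (fun i => (f (hA.eigenvalues i) : ℂ)) *
      (hA.eigenvectorUnitary : Matrix n n ℂ)ᴴ := by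
  rw [hA.cfc_eq, IsHermitian.cfc, Unitary.conjStarAlgAut_apply]
  rfl

theorem trace_cfc {A : Matrix n n ℂ} (hA : A.IsHermitian) (f : ℝ → ℝ) :
    (cfc f A).trace = ∑ i, (f (hA.eigenvalues i) : ℂ) := by
  have hU := Unitary.coe_star_mul_self hA.eigenvectorUnitary
  rw [star_eq_conjTranspose] at hU
  rw [cfc_eq_eigenvectorUnitary_mul hA, trace_mul_cycle, hU, Matrix.one_mul, trace_diagonal]

theorem trace_conjTranspose_mul_cfc_mul_mul_cfc {A : Matrix n n ℂ} {B : Matrix m m ℂ}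
    (hA : A.IsHermitian) (hB : B.IsHermitian) (f g : ℝ → ℝ) (X Z : Matrix m n ℂ) :
    (Xᴴ * cfc g B * Z * cfc f A).trace =
      ∑ i, ∑ k, (f (hA.eigenvalues i) * g (hB.eigenvalues k) : ℂ) *
        (star (eigenMatrix hA hB X k i) * eigenMatrix hA hB Z k i) := by
  have diagonalized : (Xᴴ * cfc g B * Z * cfc f A).trace =
      ((eigenMatrix hA hB X)ᴴ * (diagonal (fun k => (g (hB.eigenvalues k) : ℂ)) *
        eigenMatrix hA hB Z * diagonal (fun i => (f (hA.eigenvalues i) : ℂ)))).trace := by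
    rw [cfc_eq_eigenvectorUnitary_mul hA, cfc_eq_eigenvectorUnitary_mul hB, ← Matrix.mul_assoc,
      trace_mul_comm]
    simp only [eigenMatrix, conjTranspose_mul, conjTranspose_conjTranspose, Matrix.mul_assoc]
  rw [diagonalized]
  simp only [trace, diag_apply, mul_apply (M := (eigenMatrix hA hB X)ᴴ), mul_diagonal,
    diagonal_mul, conjTranspose_apply]
  refine Finset.sum_congr rfl fun i _ => Finset.sum_congr rfl fun k _ => ?_
  ring

end Spectral

section Overlap

variable {n : Type*} [Fintype n] [DecidableEq n] {A B : Matrix n n ℂ}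

/-- The squared modulus of the inner product of the `i`-th eigenvector of `A` and the `k`-th
eigenvector of `B`. -/
noncomputable def eigenOverlap (hA : A.IsHermitian) (hB : B.IsHermitian) (i k : n) : ℝ :=
  Complex.normSq (eigenMatrix hA hB 1 k i)

theorem re_trace_cfc_mul_cfc (hA : A.IsHermitian) (hB : B.IsHermitian) (f g : ℝ → ℝ) :
    (cfc f A * cfc g B).trace.re =
      ∑ i, ∑ k, eigenOverlap hA hB i k * (f (hA.eigenvalues i) * g (hB.eigenvalues k)) := by
  have := trace_conjTranspose_mul_cfc_mul_mul_cfc hA hB f g 1 1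
  rw [conjTranspose_one, Matrix.one_mul, Matrix.mul_one, trace_mul_comm] at this
  simp only [this, Complex.re_sum, eigenOverlap, Complex.star_def,
    ← Complex.normSq_eq_conj_mul_self]
  refine Finset.sum_congr rfl fun i _ => Finset.sum_congr rfl fun k _ => ?_
  norm_cast
  ring

theorem eigenOverlap_mul_eigenvalues_eq_zero (hA : A.IsHermitian) (hB : B.IsHermitian)
    (hker : ∀ x, B *ᵥ x = 0 → A *ᵥ x = 0) (i : n) {k : n} (hk : hB.eigenvalues k = 0) :
    eigenOverlap hA hB i k * hA.eigenvalues i = 0 := by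
  let u : n → ℂ := hA.eigenvectorBasis i
  let v : n → ℂ := hB.eigenvectorBasis k
  have Av_eq_zero : A *ᵥ v = 0 := hker v (by simp [v, hB.mulVec_eigenvectorBasis, hk])
  have inner_mul_eq_zero : (hA.eigenvalues i : ℂ) * star v ⬝ᵥ u = 0 := calc
    (hA.eigenvalues i : ℂ) * star v ⬝ᵥ u = star v ⬝ᵥ A *ᵥ u := by
      simp [u, hA.mulVec_eigenvectorBasis]
    _ = star (A *ᵥ v) ⬝ᵥ u := by rw [star_mulVec, hA.eq, dotProduct_mulVec]
    _ = 0 := by simp [Av_eq_zero]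
  have eigenMatrix_entry : eigenMatrix hA hB 1 k i = star v ⬝ᵥ u := by
    simp [eigenMatrix, mul_apply, dotProduct, IsHermitian.eigenvectorUnitary_apply, u, v]
  rw [eigenOverlap, eigenMatrix_entry]
  rcases mul_eq_zero.1 inner_mul_eq_zero with h | h
  · simp [Complex.ofReal_eq_zero.1 h]
  · simp [h]

end Overlap

section Variational

/-- A concave quadratic functional of `X` whose maximum is `interpChiSq`. It is real linear in the
pair `(ρ, σ)`, which is what lets a channel be moved onto `X`. -/
noncomputable def variationalForm {n : Type*} [Fintype n] (t : ℝ) (ρ σ X : Matrix n n ℂ) : ℝ :=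
  2 * (Xᴴ * ρ).trace.re - (1 - t) * (X * Xᴴ * σ).trace.re - t * (Xᴴ * X * ρ).trace.re

theorem variationalForm_krausMap_le {κ m n : Type*} [Fintype κ] [Fintype m] [Fintype n]
    [DecidableEq m] {K : κ → Matrix n m ℂ} (hK : ∑ k, (K k)ᴴ * K k = 1) {ρ σ : Matrix m m ℂ}
    (hρ : ρ.PosSemidef) (hσ : σ.PosSemidef) {t : ℝ} (ht₀ : 0 ≤ t) (ht₁ : t ≤ 1)
    (X : Matrix n n ℂ) :
    variationalForm t (krausMap K ρ) (krausMap K σ) X ≤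
      variationalForm t ρ σ (krausMap (fun k => (K k)ᴴ) X) := by
  have schwarz (Z : Matrix n n ℂ) {τ : Matrix m m ℂ} (hτ : τ.PosSemidef) :
      ((krausMap (fun k => (K k)ᴴ) Z)ᴴ * krausMap (fun k => (K k)ᴴ) Z * τ).trace.re ≤
        (Zᴴ * Z * krausMap K τ).trace.re := by
    have gap_nonneg := re_trace_mul_nonneg
      (posSemidef_krausMap_conjTranspose_mul_self_sub hK Z) hτ
    rwa [Matrix.sub_mul, trace_sub, Complex.sub_re, sub_nonneg, ← trace_mul_krausMap] at gap_nonneg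
  have linear_eq : (Xᴴ * krausMap K ρ).trace = ((krausMap (fun k => (K k)ᴴ) X)ᴴ * ρ).trace := by
    rw [trace_mul_krausMap, conjTranspose_krausMap]
  have schwarz_left := schwarz Xᴴ hσ
  rw [← conjTranspose_krausMap, conjTranspose_conjTranspose, conjTranspose_conjTranspose]
    at schwarz_left
  have σ_term_le := mul_le_mul_of_nonneg_left schwarz_left (sub_nonneg.2 ht₁)
  have ρ_term_le := mul_le_mul_of_nonneg_left (schwarz X hρ) ht₀
  rw [variationalForm, variationalForm, linear_eq]
  linarith

/-- The `χ²`-type divergence `∑ᵢₖ |⟨vₖ, uᵢ⟩|² pᵢ² / ((1 - t) sₖ + t pᵢ)`, where `(pᵢ, uᵢ)` and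
`(sₖ, vₖ)` are the eigenpairs of `A` and `B`; for commuting `A` and `B` it is
`tr (A² ((1 - t) B + t A)⁻¹)`. -/
noncomputable def interpChiSq {n : Type*} [Fintype n] [DecidableEq n] {A B : Matrix n n ℂ}
    (hA : A.IsHermitian) (hB : B.IsHermitian) (t : ℝ) : ℝ :=
  ∑ i, ∑ k, eigenOverlap hA hB i k *
    (hA.eigenvalues i ^ 2 / ((1 - t) * hB.eigenvalues k + t * hA.eigenvalues i))

theorem eq_zero_of_interp_eq_zero {p s t : ℝ} (hp : 0 ≤ p) (hs : 0 ≤ s) (ht₀ : 0 < t)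
    (ht₁ : t ≤ 1) (h : (1 - t) * s + t * p = 0) : p = 0 := by
  have hs' : 0 ≤ (1 - t) * s := mul_nonneg (sub_nonneg.2 ht₁) hs
  nlinarith

theorem two_mul_re_sub_normSq_eq (y w : ℂ) {p c : ℝ} (hc : c = 0 → p = 0) :
    2 * (p * (star y * w).re) - c * Complex.normSq y =
      Complex.normSq w * (p ^ 2 / c) - c * Complex.normSq (y - (p / c : ℝ) * w) := by
  by_cases h : c = 0
  · simp [h, hc h]
  · simp only [Complex.normSq_apply, Complex.star_def, Complex.mul_re, Complex.conj_re,
      Complex.conj_im, Complex.sub_re, Complex.sub_im, Complex.mul_im, Complex.ofReal_re,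
      Complex.ofReal_im, zero_mul, sub_zero, add_zero]
    field_simp
    ring

variable {n : Type*} [Fintype n] [DecidableEq n] {A B : Matrix n n ℂ}

theorem variationalForm_eq_sum (hA : A.IsHermitian) (hB : B.IsHermitian) (t : ℝ)
    (X : Matrix n n ℂ) :
    variationalForm t A B X = ∑ i, ∑ k,
      (2 * (hA.eigenvalues i * (star (eigenMatrix hA hB X k i) * eigenMatrix hA hB 1 k i).re) -
        ((1 - t) * hB.eigenvalues k + t * hA.eigenvalues i) *
          Complex.normSq (eigenMatrix hA hB X k i)) := by
  have linear_term := trace_conjTranspose_mul_cfc_mul_mul_cfc hA hB (fun x => x) (fun _ => 1) X 1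
  have left_term := trace_conjTranspose_mul_cfc_mul_mul_cfc hA hB (fun _ => 1) (fun x => x) X X
  have right_term := trace_conjTranspose_mul_cfc_mul_mul_cfc hA hB (fun x => x) (fun _ => 1) X X
  have one_A := cfc_const_one ℝ A hA.isSelfAdjoint
  have one_B := cfc_const_one ℝ B hB.isSelfAdjoint
  have id_A := cfc_id' ℝ A hA.isSelfAdjoint
  have id_B := cfc_id' ℝ B hB.isSelfAdjoint
  rw [one_B, id_A, Matrix.mul_one, Matrix.mul_one] at linear_term
  rw [one_A, id_B, Matrix.mul_one, trace_mul_cycle] at left_term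
  rw [one_B, id_A, Matrix.mul_one] at right_term
  rw [variationalForm, linear_term, left_term, right_term]
  simp only [Complex.re_sum, Finset.mul_sum, ← Finset.sum_sub_distrib, Complex.star_def,
    ← Complex.normSq_eq_conj_mul_self]
  refine Finset.sum_congr rfl fun i _ => Finset.sum_congr rfl fun k _ => ?_
  simp only [Complex.ofReal_one, mul_one, one_mul, Complex.re_ofReal_mul, Complex.ofReal_re]
  ring

theorem isGreatest_interpChiSq (hA : A.PosSemidef) (hB : B.PosSemidef) {t : ℝ} (ht₀ : 0 < t)
    (ht₁ : t ≤ 1) :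
    IsGreatest (Set.range (variationalForm t A B)) (interpChiSq hA.1 hB.1 t) := by
  let c (i k : n) : ℝ := (1 - t) * hB.1.eigenvalues k + t * hA.1.eigenvalues i
  have c_nonneg (i k : n) : 0 ≤ c i k :=
    add_nonneg (mul_nonneg (sub_nonneg.2 ht₁) (hB.eigenvalues_nonneg k))
      (mul_nonneg ht₀.le (hA.eigenvalues_nonneg i))
  have completed_square (X : Matrix n n ℂ) : variationalForm t A B X =
      interpChiSq hA.1 hB.1 t - ∑ i, ∑ k, c i k * Complex.normSq (eigenMatrix hA.1 hB.1 X k i -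
        (hA.1.eigenvalues i / c i k : ℝ) * eigenMatrix hA.1 hB.1 1 k i) := by
    rw [variationalForm_eq_sum hA.1 hB.1, interpChiSq]
    simp only [← Finset.sum_sub_distrib]
    refine Finset.sum_congr rfl fun i _ => Finset.sum_congr rfl fun k _ => ?_
    exact two_mul_re_sub_normSq_eq _ _ fun h =>
      eq_zero_of_interp_eq_zero (hA.eigenvalues_nonneg i) (hB.eigenvalues_nonneg k) ht₀ ht₁ h
  constructor
  · obtain ⟨X, hX⟩ := eigenMatrix_surjective hA.1 hB.1
      (of fun k i => (hA.1.eigenvalues i / c i k : ℝ) * eigenMatrix hA.1 hB.1 1 k i)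
    exact ⟨X, by simp [completed_square, hX]⟩
  · rintro _ ⟨X, rfl⟩
    rw [completed_square, sub_le_self_iff]
    exact Finset.sum_nonneg fun i _ => Finset.sum_nonneg fun k _ =>
      mul_nonneg (c_nonneg i k) (Complex.normSq_nonneg _)

end Variational

theorem interpChiSq_krausMap_le {κ m n : Type*} [Fintype κ] [Fintype m] [Fintype n]
    [DecidableEq m] [DecidableEq n] {K : κ → Matrix n m ℂ} (hK : ∑ k, (K k)ᴴ * K k = 1)
    {ρ σ : Matrix m m ℂ} (hρ : ρ.PosSemidef) (hσ : σ.PosSemidef) {t : ℝ} (ht₀ : 0 < t)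
    (ht₁ : t ≤ 1) :
    interpChiSq (posSemidef_krausMap K hρ).1 (posSemidef_krausMap K hσ).1 t ≤
      interpChiSq hρ.1 hσ.1 t := by
  obtain ⟨X, hX⟩ :=
    (isGreatest_interpChiSq (posSemidef_krausMap K hρ) (posSemidef_krausMap K hσ) ht₀ ht₁).1
  rw [← hX]
  exact (variationalForm_krausMap_le hK hρ hσ ht₀.le ht₁ X).trans
    ((isGreatest_interpChiSq hρ hσ ht₀ ht₁).2 ⟨_, rfl⟩)

section RelEntropy

/-- Umegaki's relative entropy `tr ρ (log ρ - log σ)`, in nats. Because `Real.log 0 = 0`, this is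
the usual quantity only when the kernel of `σ` is contained in that of `ρ`. -/
noncomputable def relEntropy {n : Type*} [Fintype n] [DecidableEq n] (ρ σ : Matrix n n ℂ) : ℝ :=
  (ρ * (cfc Real.log ρ - cfc Real.log σ)).trace.re

variable {n : Type*} [Fintype n] [DecidableEq n] {A B : Matrix n n ℂ}

theorem mul_cfc_log_eq (hA : A.IsHermitian) :
    A * cfc Real.log A = cfc (fun x => x * Real.log x) A := by
  rw [cfc_mul (fun x => x) Real.log A (A.finite_real_spectrum.continuousOn _)
    (A.finite_real_spectrum.continuousOn _), cfc_id' ℝ A hA.isSelfAdjoint]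

theorem relEntropy_eq_sum (hA : A.IsHermitian) (hB : B.IsHermitian) :
    relEntropy A B = ∑ i, ∑ k, eigenOverlap hA hB i k *
      (hA.eigenvalues i * (Real.log (hA.eigenvalues i) - Real.log (hB.eigenvalues k))) := by
  have self_term := re_trace_cfc_mul_cfc hA hB (fun x => x * Real.log x) (fun _ => 1)
  have cross_term := re_trace_cfc_mul_cfc hA hB (fun x => x) Real.log
  rw [cfc_const_one ℝ B hB.isSelfAdjoint, Matrix.mul_one] at self_term
  rw [cfc_id' ℝ A hA.isSelfAdjoint] at cross_term
  rw [relEntropy, Matrix.mul_sub, trace_sub, Complex.sub_re, mul_cfc_log_eq hA, self_term,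
    cross_term]
  simp only [← Finset.sum_sub_distrib, mul_sub, mul_one]

/-- The path from `0` to `relEntropy A B` obtained by replacing `log A` with
`log ((1 - t) B + t A)`, eigenvalue by eigenvalue. -/
noncomputable def relEntropyPath (hA : A.IsHermitian) (hB : B.IsHermitian) (t : ℝ) : ℝ :=
  ∑ i, ∑ k, eigenOverlap hA hB i k * hA.eigenvalues i *
    (Real.log ((1 - t) * hB.eigenvalues k + t * hA.eigenvalues i) - Real.log (hB.eigenvalues k))

theorem relEntropyPath_zero (hA : A.IsHermitian) (hB : B.IsHermitian) :
    relEntropyPath hA hB 0 = 0 := by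
  simp [relEntropyPath]

theorem relEntropyPath_one (hA : A.IsHermitian) (hB : B.IsHermitian) :
    relEntropyPath hA hB 1 = relEntropy A B := by
  simp [relEntropyPath, relEntropy_eq_sum hA hB, mul_assoc]

theorem hasDerivAt_mul_log_interp {p s t : ℝ} (hp : 0 ≤ p) (hs : 0 ≤ s) (ht : t ∈ Set.Ioo 0 1) :
    HasDerivAt (fun t => p * (Real.log ((1 - t) * s + t * p) - Real.log s))
      ((p ^ 2 / ((1 - t) * s + t * p) - p) / (1 - t)) t := by
  by_cases hc : (1 - t) * s + t * p = 0
  · obtain rfl := eq_zero_of_interp_eq_zero hp hs ht.1 ht.2.le hc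
    simpa using hasDerivAt_const t (0 : ℝ)
  · have ht' : 1 - t ≠ 0 := (sub_pos.2 ht.2).ne'
    have interp_deriv : HasDerivAt (fun t => (1 - t) * s + t * p) (-1 * s + 1 * p) t :=
      (((hasDerivAt_id t).const_sub 1).mul_const s).add ((hasDerivAt_id t).mul_const p)
    refine (((interp_deriv.log hc).sub_const _).const_mul p).congr_deriv ?_
    generalize hcs : (1 - t) * s + t * p = c at hc ⊢
    field_simp
    rw [← hcs]
    ring

theorem continuousOn_mul_log_interp {w p s : ℝ} (hp : 0 ≤ p) (hs : 0 ≤ s)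
    (hws : s = 0 → w * p = 0) :
    ContinuousOn (fun t => w * p * (Real.log ((1 - t) * s + t * p) - Real.log s))
      (Set.Icc 0 1) := by
  by_cases hwp : w * p = 0
  · simpa [hwp] using continuousOn_const
  have hp' : 0 < p := hp.lt_of_ne' (right_ne_zero_of_mul hwp)
  have hs' : 0 < s := hs.lt_of_ne' fun h => hwp (hws h)
  refine continuousOn_const.mul (ContinuousOn.sub ?_ continuousOn_const)
  refine ContinuousOn.log (by fun_prop) fun t ht hc => hp'.ne' ?_
  rcases ht.1.eq_or_lt with rfl | ht₀
  · simp [hs'.ne'] at hc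
  · exact eq_zero_of_interp_eq_zero hp hs ht₀ ht.2 hc

theorem hasDerivAt_relEntropyPath (hA : A.PosSemidef) (hB : B.PosSemidef) {t : ℝ}
    (ht : t ∈ Set.Ioo 0 1) :
    HasDerivAt (relEntropyPath hA.1 hB.1)
      ((interpChiSq hA.1 hB.1 t - A.trace.re) / (1 - t)) t := by
  have trace_eq : A.trace.re = ∑ i, ∑ k, eigenOverlap hA.1 hB.1 i k * hA.1.eigenvalues i := by
    simpa [cfc_id' ℝ A hA.1.isSelfAdjoint, cfc_const_one ℝ B hB.1.isSelfAdjoint] using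
      re_trace_cfc_mul_cfc hA.1 hB.1 (fun x => x) (fun _ => 1)
  have termwise := HasDerivAt.fun_sum fun i (_ : i ∈ Finset.univ) =>
    HasDerivAt.fun_sum fun k (_ : k ∈ Finset.univ) =>
      (hasDerivAt_mul_log_interp (hA.eigenvalues_nonneg i) (hB.eigenvalues_nonneg k) ht).const_mul
        (eigenOverlap hA.1 hB.1 i k)
  simp only [← mul_assoc] at termwise
  refine termwise.congr_deriv ?_
  rw [trace_eq, interpChiSq]
  simp only [← Finset.sum_sub_distrib, Finset.sum_div]
  refine Finset.sum_congr rfl fun i _ => Finset.sum_congr rfl fun k _ => ?_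
  ring

theorem continuousOn_relEntropyPath (hA : A.PosSemidef) (hB : B.PosSemidef)
    (hker : ∀ x, B *ᵥ x = 0 → A *ᵥ x = 0) :
    ContinuousOn (relEntropyPath hA.1 hB.1) (Set.Icc 0 1) :=
  continuousOn_finsetSum _ fun i _ => continuousOn_finsetSum _ fun k _ =>
    continuousOn_mul_log_interp (hA.eigenvalues_nonneg i) (hB.eigenvalues_nonneg k)
      (eigenOverlap_mul_eigenvalues_eq_zero hA.1 hB.1 hker i)

theorem relEntropy_le_of_interpChiSq_le {m : Type*} [Fintype m] [DecidableEq m]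
    {A' B' : Matrix m m ℂ} (hA : A.PosSemidef) (hB : B.PosSemidef) (hA' : A'.PosSemidef)
    (hB' : B'.PosSemidef) (hker : ∀ x, B *ᵥ x = 0 → A *ᵥ x = 0)
    (hker' : ∀ x, B' *ᵥ x = 0 → A' *ᵥ x = 0) (htrace : A'.trace = A.trace)
    (hle : ∀ t ∈ Set.Ioo (0 : ℝ) 1, interpChiSq hA'.1 hB'.1 t ≤ interpChiSq hA.1 hB.1 t) :
    relEntropy A' B' ≤ relEntropy A B := by
  have gap_deriv (t : ℝ) (ht : t ∈ Set.Ioo 0 1) :=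
    (hasDerivAt_relEntropyPath hA hB ht).sub (hasDerivAt_relEntropyPath hA' hB' ht)
  have gap_monotone :
      MonotoneOn (relEntropyPath hA.1 hB.1 - relEntropyPath hA'.1 hB'.1) (Set.Icc 0 1) := by
    refine monotoneOn_of_hasDerivWithinAt_nonneg (convex_Icc 0 1)
      ((continuousOn_relEntropyPath hA hB hker).sub (continuousOn_relEntropyPath hA' hB' hker'))
      (fun t ht => (gap_deriv t (interior_Icc.subset ht)).hasDerivWithinAt) fun t ht => ?_
    rw [interior_Icc] at ht
    rw [← sub_div, htrace, sub_sub_sub_cancel_right]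
    exact div_nonneg (sub_nonneg.2 (hle t ht)) (sub_nonneg.2 ht.2.le)
  simpa [relEntropyPath_zero, relEntropyPath_one] using
    gap_monotone (Set.left_mem_Icc.2 zero_le_one) (Set.right_mem_Icc.2 zero_le_one) zero_le_one

end RelEntropy

theorem relEntropy_krausMap_le {κ m n : Type*} [Fintype κ] [Fintype m] [Fintype n]
    [DecidableEq m] [DecidableEq n] {K : κ → Matrix n m ℂ} (hK : ∑ k, (K k)ᴴ * K k = 1)
    {ρ σ : Matrix m m ℂ} (hρ : ρ.PosSemidef) (hσ : σ.PosSemidef)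
    (hker : ∀ x, σ *ᵥ x = 0 → ρ *ᵥ x = 0) :
    relEntropy (krausMap K ρ) (krausMap K σ) ≤ relEntropy ρ σ :=
  relEntropy_le_of_interpChiSq_le hρ hσ (posSemidef_krausMap K hρ) (posSemidef_krausMap K hσ) hker
    (fun _ => krausMap_mulVec_eq_zero K hσ hker) (trace_krausMap hK ρ)
    fun _ ht => interpChiSq_krausMap_le hK hρ hσ ht.1 ht.2.le

section Holevo

theorem vnEntropy_eq_neg_re_trace {n : Type*} [Fintype n] [DecidableEq n] {A : Matrix n n ℂ}
    (hA : A.IsHermitian) : vnEntropy A = -(A * cfc Real.log A).trace.re / Real.log 2 := by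
  rw [vnEntropy, dif_pos hA, mul_cfc_log_eq hA, trace_cfc hA, Complex.re_sum, neg_div,
    Finset.sum_div]
  simp only [Complex.ofReal_re, Real.logb, mul_div_assoc]

variable {ι n : Type*} [Fintype ι] [Fintype n]

/-- The Holevo information, in bits, of a finite ensemble of matrices `ρ j` with weights `q j`,
without normalization of the weights or of the traces. -/
noncomputable def holevoInfo [DecidableEq n] (q : ι → ℝ) (ρ : ι → Matrix n n ℂ) : ℝ :=
  vnEntropy (∑ j, (q j : ℂ) • ρ j) - ∑ j, q j * vnEntropy (ρ j)

variable [DecidableEq n]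

theorem holevoInfo_eq_sum_relEntropy (q : ι → ℝ) {ρ : ι → Matrix n n ℂ}
    (hρ : ∀ j, (ρ j).IsHermitian) :
    holevoInfo q ρ = (∑ j, q j * relEntropy (ρ j) (∑ i, (q i : ℂ) • ρ i)) / Real.log 2 := by
  have avg_isHermitian : (∑ j, (q j : ℂ) • ρ j).IsHermitian := by
    simp only [IsHermitian, conjTranspose_sum, conjTranspose_smul, (hρ _).eq, Complex.star_def,
      Complex.conj_ofReal]
  have avg_term : ((∑ j, (q j : ℂ) • ρ j) * cfc Real.log (∑ j, (q j : ℂ) • ρ j)).trace.re =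
      ∑ j, q j * (ρ j * cfc Real.log (∑ i, (q i : ℂ) • ρ i)).trace.re := by
    generalize cfc Real.log (∑ j, (q j : ℂ) • ρ j) = L
    simp [Matrix.sum_mul, trace_sum]
  simp only [holevoInfo, vnEntropy_eq_neg_re_trace avg_isHermitian,
    fun j => vnEntropy_eq_neg_re_trace (hρ j), avg_term, relEntropy, trace_sub, Complex.sub_re,
    mul_sub, mul_neg, neg_div, Finset.sum_sub_distrib, Finset.sum_neg_distrib, ← mul_div_assoc,
    ← Finset.sum_div]
  ring

theorem holevo_mono_ptrace_general {κ m : Type*} [Fintype κ] [Fintype m] [DecidableEq m]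
    {K : κ → Matrix m n ℂ} (hK : ∑ k, (K k)ᴴ * K k = 1) {q : ι → ℝ} (hq : ∀ j, 0 ≤ q j)
    {ρ : ι → Matrix n n ℂ} (hρ : ∀ j, (ρ j).PosSemidef) :
    holevoInfo q (fun j => krausMap K (ρ j)) ≤ holevoInfo q ρ := by
  have term_psd (j : ι) : ((q j : ℂ) • ρ j).PosSemidef := (hρ j).smul (by exact_mod_cast hq j)
  have avg_psd := posSemidef_sum Finset.univ fun j _ => term_psd j
  rw [holevoInfo_eq_sum_relEntropy q (fun j => (hρ j).1),
    holevoInfo_eq_sum_relEntropy q fun j => (posSemidef_krausMap K (hρ j)).1]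
  simp only [← map_smul, ← map_sum]
  refine div_le_div_of_nonneg_right (Finset.sum_le_sum fun j _ => ?_) (Real.log_nonneg one_le_two)
  rcases (hq j).eq_or_lt with hj | hj
  · simp [← hj]
  · have hker (x : n → ℂ) (hx : (∑ i, (q i : ℂ) • ρ i) *ᵥ x = 0) : ρ j *ᵥ x = 0 := by
      have term_zero := mulVec_eq_zero_of_sum_mulVec_eq_zero term_psd hx j
      rw [smul_mulVec] at term_zero
      exact (smul_eq_zero.1 term_zero).resolve_left (by exact_mod_cast hj.ne')
    exact mul_le_mul_of_nonneg_left (relEntropy_krausMap_le hK (hρ j) avg_psd hker) hj.le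

end Holevo

/-- The Kraus operator `1 ⊗ ⟨k|` of the partial trace over the second system. -/
def ptraceKraus (a : Type*) {b : Type*} [DecidableEq a] [DecidableEq b] (k : b) :
    Matrix a (a × b) ℂ :=
  (1 : Matrix (a × b) (a × b) ℂ).submatrix (fun i => (i, k)) id

theorem sum_conjTranspose_ptraceKraus_mul_self (a b : Type*) [Fintype a] [Fintype b]
    [DecidableEq a] [DecidableEq b] :
    ∑ k : b, (ptraceKraus a k)ᴴ * ptraceKraus a k = 1 := by
  ext ⟨i, k⟩ ⟨i', k'⟩
  simp only [Matrix.sum_apply, mul_apply, ptraceKraus, conjTranspose_submatrix, conjTranspose_one,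
    submatrix_apply]
  rw [← Fintype.sum_prod_type_right']
  exact congr_fun₂ (Matrix.one_mul (1 : Matrix (a × b) (a × b) ℂ)) (i, k) (i', k')

theorem ptraceB_eq_krausMap {dA dB : ℕ} (ρ : Matrix (Fin dA × Fin dB) (Fin dA × Fin dB) ℂ) :
    ptraceB ρ = krausMap (ptraceKraus (Fin dA)) ρ := by
  ext i i'
  simp [ptraceB, krausMap_apply, ptraceKraus, Matrix.sum_apply, mul_apply, one_apply]

/-- monotonicity of the Holevo information under partial trace. -/
theorem holevo_mono_ptrace {dA dB m : ℕ}
    (q : Fin m → ℝ) (hq : ∀ j, 0 ≤ q j) (hqs : ∑ j, q j = 1)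
    (ρ : Fin m → Matrix (Fin dA × Fin dB) (Fin dA × Fin dB) ℂ)
    (hρ : ∀ j, IsDensityMatrix (ρ j)) :
    vnEntropy (∑ j, (q j : ℂ) • ptraceB (ρ j)) - ∑ j, q j * vnEntropy (ptraceB (ρ j)) ≤
      vnEntropy (∑ j, (q j : ℂ) • ρ j) - ∑ j, q j * vnEntropy (ρ j) := by
  simp only [ptraceB_eq_krausMap]
  exact holevo_mono_ptrace_general (sum_conjTranspose_ptraceKraus_mul_self _ _) hq
    fun j => (hρ j).1
end

section
/- Holevo–Schumacher–Westmoreland random coding theorem (i.i.d. codewords): let W : Fin m → (density matrices on ℂ^d) be a classical–quantum channel, q a probability distribution on Fin m with q_j > 0, and χ = S(∑_j q_j W_j) − ∑_j q_j S(W_j) its Holevo information; assume χ > 0. Then for every ε, δ ∈ (0,1) with δ < χ there exists n₀ such that for all n ≥ n₀ and all N ≥ 1 with log₂ N ≤ n(χ − δ), the following holds: if the codewords U^{(1)},…,U^{(N)} ∈ (Fin m)^n are chosen independently, each with probability ∏_{t=1}^n q_{U_t}, then with probability at least 1 − ε there exists a POVM (D_1,…,D_N) on the d^n-dimensional space (each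 D_i positive semidefinite, ∑_{i=1}^N D_i ≤ 1) such that (1/N)·∑_{i=1}^N Re(trace(W_{U^{(i)}} D_i)) ≥ 1 − ε, where for U ∈ (Fin m)^n, W_U denotes the tensor-power matrix on (Fin d)^n-indexed space with entries (W_U)_{J,K} = ∏_{t=1}^n (W_{U_t})_{J_t K_t}. -/
open scoped ComplexConjugate ComplexOrder

/-- The `n`-fold tensor-power matrix `W_{U_1} ⊗ ⋯ ⊗ W_{U_n}` associated to a
codeword `U ∈ (Fin m)^n`, with entries `(W_U)_{J,K} = ∏_t (W_{U_t})_{J_t K_t}`. -/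
noncomputable def tensorWord {m d n : ℕ} (W : Fin m → Matrix (Fin d) (Fin d) ℂ)
    (U : Fin n → Fin m) : Matrix (Fin n → Fin d) (Fin n → Fin d) ℂ :=
  Matrix.of fun J K => ∏ t, W (U t) (J t) (K t)

/-!
Let `ρ = ∑ j, q j • W j`. The decoder first tests whether the received state lies in the typical
subspace of `ρ^{⊗n}`, and then asks for one message `i` after the other whether it lies in the
conditionally typical subspace of the codeword `U i`, until the answer is yes. Writing the
state as `A * Aᴴ`, the part of `A` cut off by a negative answer is orthogonal to what survives of
the earlier disturbance, so squared Frobenius distances add up, and the total disturbance is at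
most a sum of error probabilities (Sen's noncommutative union bound); if this sum is `e`, decoding
succeeds with probability at least `1 - 2 √e`.

By the law of large numbers the true state passes both of its own tests with probability close to
`1`. On the typical subspace, `ρ^{⊗n}` has eigenvalues at most `2 ^ (-n (S(ρ) - δ / 4))`, and a
conditionally typical subspace has dimension at most `2 ^ (n (∑ j, q j S(W j) + δ / 4))`. Hence a
random codeword is mistaken for a given wrong one with probability at most `2 ^ (-n (χ - δ / 2))`
on average, and `N ≤ 2 ^ (n (χ - δ))` of them contribute at most `2 ^ (-n δ / 2)`. Markov's
inequality turns the bound on the mean of `e` into one that holds for most codes.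
-/

namespace HSW

open Matrix Filter
open scoped Topology

section BornProbability

variable {n : Type*} [Fintype n]

open scoped MatrixOrder in
theorem exists_eq_mul_conjTranspose {σ : Matrix n n ℂ} (hσ : σ.PosSemidef) :
    ∃ A, σ = A * Aᴴ := by
  classical
  exact CStarAlgebra.nonneg_iff_eq_mul_star_self.1 hσ.nonneg

open scoped MatrixOrder in
theorem posSemidef_of_isStarProjection {P : Matrix n n ℂ} (hP : IsStarProjection P) :
    P.PosSemidef :=
  hP.nonneg.posSemidef

open scoped Matrix.Norms.Frobenius

/-- The Born probability `tr (σ E)` that a measurement of the state `σ` yields the outcome with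
effect `E`. It is real for Hermitian arguments, and is encoded as a real part. -/
noncomputable def bornProb (σ E : Matrix n n ℂ) : ℝ :=
  (σ * E).trace.re

theorem bornProb_one_sub [DecidableEq n] {σ : Matrix n n ℂ} (hσ : IsDensityMatrix σ)
    (E : Matrix n n ℂ) : bornProb σ (1 - E) = 1 - bornProb σ E := by
  simp [bornProb, mul_sub, hσ.2]

theorem sum_mul_bornProb {Ω : Type*} [Fintype Ω] (Q : Ω → ℝ) (σ : Ω → Matrix n n ℂ)
    (E : Matrix n n ℂ) :
    ∑ u, Q u * bornProb (σ u) E = bornProb (∑ u, (Q u : ℂ) • σ u) E := by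
  simp [bornProb, Matrix.sum_mul, trace_sum]

theorem bornProb_conj (P σ E : Matrix n n ℂ) :
    bornProb (P * σ * P) E = bornProb σ (P * E * P) := by
  rw [bornProb, Matrix.mul_assoc, Matrix.mul_assoc, trace_mul_comm P, bornProb]
  simp only [Matrix.mul_assoc]

theorem frobenius_norm_sq (A : Matrix n n ℂ) : ‖A‖ ^ 2 = (Aᴴ * A).trace.re := by
  rw [frobenius_norm_def, ← Real.sqrt_eq_rpow, Real.sq_sqrt (by positivity), Finset.sum_comm]
  simp [trace, mul_apply, Complex.conj_mul', ← Complex.ofReal_pow]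

theorem bornProb_mul_conjTranspose (A G : Matrix n n ℂ) :
    bornProb (A * Aᴴ) (Gᴴ * G) = ‖G * A‖ ^ 2 := by
  rw [frobenius_norm_sq, bornProb, Matrix.mul_assoc A, trace_mul_comm, conjTranspose_mul]
  simp only [Matrix.mul_assoc]

theorem bornProb_nonneg {σ E : Matrix n n ℂ} (hσ : σ.PosSemidef) (hE : E.PosSemidef) :
    0 ≤ bornProb σ E := by
  obtain ⟨A, rfl⟩ := exists_eq_mul_conjTranspose hσ
  obtain ⟨G, rfl⟩ := exists_eq_mul_conjTranspose hE
  simpa using (bornProb_mul_conjTranspose A Gᴴ).ge.trans' (sq_nonneg _)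

end BornProbability

section SequentialDecoding

open scoped Matrix.Norms.Frobenius

variable {n : Type*} [Fintype n]

theorem conjTranspose_mul_self_of_isStarProjection {P : Matrix n n ℂ} (hP : IsStarProjection P)
    (X : Matrix n n ℂ) : (P * X)ᴴ * (P * X) = Xᴴ * P * X := by
  rw [conjTranspose_mul, ← star_eq_conjTranspose P, hP.isSelfAdjoint.star_eq, Matrix.mul_assoc,
    ← Matrix.mul_assoc P, hP.isIdempotentElem.eq, Matrix.mul_assoc]

theorem bornProb_of_isStarProjection {P : Matrix n n ℂ} (hP : IsStarProjection P)
    (A : Matrix n n ℂ) : bornProb (A * Aᴴ) P = ‖P * A‖ ^ 2 := by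
  rw [← bornProb_mul_conjTranspose, ← star_eq_conjTranspose P, hP.isSelfAdjoint.star_eq,
    hP.isIdempotentElem.eq]

theorem bornProb_cutoff_nonneg {σ P₀ P : Matrix n n ℂ} (hσ : σ.PosSemidef)
    (hP₀ : IsStarProjection P₀) (hP : IsStarProjection P) : 0 ≤ bornProb (P₀ * σ * P₀) P := by
  have := hσ.conjTranspose_mul_mul_same P₀
  rw [← star_eq_conjTranspose P₀, hP₀.isSelfAdjoint.star_eq] at this
  exact bornProb_nonneg this (posSemidef_of_isStarProjection hP)

variable [DecidableEq n]

theorem norm_sq_eq_add_of_isStarProjection {P : Matrix n n ℂ} (hP : IsStarProjection P)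
    (X : Matrix n n ℂ) : ‖X‖ ^ 2 = ‖(1 - P) * X‖ ^ 2 + ‖P * X‖ ^ 2 := by
  simp only [frobenius_norm_sq, conjTranspose_mul_self_of_isStarProjection hP,
    conjTranspose_mul_self_of_isStarProjection hP.one_sub, ← Complex.add_re, ← trace_add,
    ← Matrix.add_mul, ← Matrix.mul_add, sub_add_cancel, Matrix.mul_one]

theorem norm_mul_le_of_isStarProjection {P : Matrix n n ℂ} (hP : IsStarProjection P)
    (X : Matrix n n ℂ) : ‖P * X‖ ≤ ‖X‖ := by
  rw [← sq_le_sq₀ (norm_nonneg _) (norm_nonneg _), norm_sq_eq_add_of_isStarProjection hP X]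
  exact le_add_of_nonneg_left (sq_nonneg _)

theorem norm_sub_isStarProjection_mul_sq_le {P : Matrix n n ℂ} (hP : IsStarProjection P)
    (X Y : Matrix n n ℂ) : ‖X - P * Y‖ ^ 2 ≤ ‖(1 - P) * X‖ ^ 2 + ‖X - Y‖ ^ 2 := by
  have orthogonal_part : (1 - P) * (X - P * Y) = (1 - P) * X := by
    rw [Matrix.mul_sub, ← Matrix.mul_assoc, hP.one_sub_mul_self, Matrix.zero_mul, sub_zero]
  have range_part : P * (X - P * Y) = P * (X - Y) := by
    rw [Matrix.mul_sub, Matrix.mul_sub, ← Matrix.mul_assoc, hP.isIdempotentElem.eq]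
  rw [norm_sq_eq_add_of_isStarProjection hP (X - P * Y), orthogonal_part, range_part]
  gcongr
  exact norm_mul_le_of_isStarProjection hP _

/-- The operator `(1 - P (k-1)) ⋯ (1 - P 1) (1 - P 0)` by which a state evolves when the yes-no
measurements `P 0, …, P (k-1)` are performed in turn and all answer no. -/
def residual (P : ℕ → Matrix n n ℂ) : ℕ → Matrix n n ℂ
  | 0 => 1
  | k + 1 => (1 - P k) * residual P k

/-- The effect of the outcome `k` in the sequential measurement of `P 0, P 1, …`: the first `k`
measurements answer no and the next one answers yes. -/
def seqEffect (P : ℕ → Matrix n n ℂ) (k : ℕ) : Matrix n n ℂ :=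
  (P k * residual P k)ᴴ * (P k * residual P k)

theorem sum_range_seqEffect {P : ℕ → Matrix n n ℂ} (hP : ∀ k, IsStarProjection (P k)) (N : ℕ) :
    ∑ k ∈ Finset.range N, seqEffect P k = 1 - (residual P N)ᴴ * residual P N := by
  induction N with
  | zero => simp [residual]
  | succ N ih =>
    rw [Finset.sum_range_succ, ih, residual, seqEffect,
      conjTranspose_mul_self_of_isStarProjection (hP N).one_sub,
      conjTranspose_mul_self_of_isStarProjection (hP N), Matrix.mul_sub, Matrix.sub_mul,
      Matrix.mul_one]
    abel

theorem norm_sub_residual_mul_sq_le {P : ℕ → Matrix n n ℂ} (hP : ∀ k, IsStarProjection (P k))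
    (X : Matrix n n ℂ) (N : ℕ) :
    ‖X - residual P N * X‖ ^ 2 ≤ ∑ k ∈ Finset.range N, ‖P k * X‖ ^ 2 := by
  induction N with
  | zero => simp [residual]
  | succ N ih =>
    rw [residual, Matrix.mul_assoc, Finset.sum_range_succ, add_comm]
    refine (norm_sub_isStarProjection_mul_sq_le (hP N).one_sub X _).trans ?_
    rw [sub_sub_cancel]
    gcongr

theorem one_sub_two_mul_sqrt_le_norm_sq {E : Type*} [SeminormedAddCommGroup E] {x y : E} {e : ℝ}
    (hx : ‖x‖ = 1) (hxy : ‖x - y‖ ^ 2 ≤ e) : 1 - 2 * √e ≤ ‖y‖ ^ 2 := by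
  have h_sqrt : ‖x - y‖ ≤ √e := Real.le_sqrt_of_sq_le hxy
  nlinarith [norm_sub_norm_le x y, sq_nonneg (‖y‖ - 1)]

theorem norm_add_sq_le_two_mul {E : Type*} [SeminormedAddCommGroup E] (x y : E) :
    ‖x + y‖ ^ 2 ≤ 2 * (‖x‖ ^ 2 + ‖y‖ ^ 2) :=
  (pow_le_pow_left₀ (norm_nonneg _) (norm_add_le x y) 2).trans add_sq_le

theorem norm_sub_mul_residual_mul_sq_le {P₀ : Matrix n n ℂ} {P : ℕ → Matrix n n ℂ}
    (hP : ∀ k, IsStarProjection (P k)) (A : Matrix n n ℂ) (i : ℕ) :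
    ‖A - P i * residual P i * P₀ * A‖ ^ 2 ≤ 6 * ‖(1 - P₀) * A‖ ^ 2 + 4 * ‖(1 - P i) * A‖ ^ 2 +
      2 * ∑ j ∈ Finset.range i, ‖P j * (P₀ * A)‖ ^ 2 := by
  have split_cutoff : ‖A - P i * residual P i * P₀ * A‖ ^ 2 ≤
      2 * (‖(1 - P₀) * A‖ ^ 2 + ‖P₀ * A - P i * (residual P i * (P₀ * A))‖ ^ 2) := by
    have h_eq : A - P i * residual P i * P₀ * A =
        (1 - P₀) * A + (P₀ * A - P i * (residual P i * (P₀ * A))) := by noncomm_ring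
    exact h_eq ▸ norm_add_sq_le_two_mul _ _
  have sequential : ‖P₀ * A - P i * (residual P i * (P₀ * A))‖ ^ 2 ≤
      ‖(1 - P i) * (P₀ * A)‖ ^ 2 + ∑ j ∈ Finset.range i, ‖P j * (P₀ * A)‖ ^ 2 :=
    (norm_sub_isStarProjection_mul_sq_le (hP i) _ _).trans
      (by gcongr; exact norm_sub_residual_mul_sq_le hP _ i)
  have remove_cutoff : ‖(1 - P i) * (P₀ * A)‖ ^ 2 ≤
      2 * (‖(1 - P i) * A‖ ^ 2 + ‖(1 - P₀) * A‖ ^ 2) := by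
    have h_eq : (1 - P i) * (P₀ * A) = (1 - P i) * A + -((1 - P i) * ((1 - P₀) * A)) := by
      noncomm_ring
    rw [h_eq]
    refine (norm_add_sq_le_two_mul _ _).trans ?_
    rw [norm_neg]
    gcongr
    exact norm_mul_le_of_isStarProjection (hP i).one_sub _
  linarith

/-- Upper bound on the squared disturbance suffered by the state `σ` when the cutoff `P₀` and then
sequential measurements of the projections `P j` are performed until the measurement of `P i` is
expected to answer yes. It has the contributions of `σ` missing the cutoff, of `σ` missing
`P i`, and of `σ` being mistaken for another `j`. -/
noncomputable def packingError {ι : Type*} [Fintype ι] [DecidableEq ι] (P₀ : Matrix n n ℂ)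
    (P : ι → Matrix n n ℂ) (σ : Matrix n n ℂ) (i : ι) : ℝ :=
  6 * bornProb σ (1 - P₀) + 4 * bornProb σ (1 - P i) +
    2 * ∑ j ∈ Finset.univ.erase i, bornProb (P₀ * σ * P₀) (P j)

theorem packingError_nonneg {ι : Type*} [Fintype ι] [DecidableEq ι] {σ P₀ : Matrix n n ℂ}
    {P : ι → Matrix n n ℂ} (hσ : σ.PosSemidef) (hP₀ : IsStarProjection P₀)
    (hP : ∀ i, IsStarProjection (P i)) (i : ι) : 0 ≤ packingError P₀ P σ i := by
  have cutoff_nonneg := bornProb_nonneg hσ (posSemidef_of_isStarProjection hP₀.one_sub)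
  have own_nonneg := bornProb_nonneg hσ (posSemidef_of_isStarProjection (hP i).one_sub)
  have confusion_nonneg : 0 ≤ ∑ j ∈ Finset.univ.erase i, bornProb (P₀ * σ * P₀) (P j) :=
    Finset.sum_nonneg fun j _ => bornProb_cutoff_nonneg hσ hP₀ (hP j)
  rw [packingError]
  linarith

theorem bornProb_cutoff_seqEffect {P₀ : Matrix n n ℂ} (hP₀ : IsStarProjection P₀)
    (P : ℕ → Matrix n n ℂ) (A : Matrix n n ℂ) (k : ℕ) :
    bornProb (A * Aᴴ) (P₀ * seqEffect P k * P₀) = ‖P k * residual P k * P₀ * A‖ ^ 2 := by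
  rw [← bornProb_mul_conjTranspose, conjTranspose_mul _ P₀, seqEffect, ← star_eq_conjTranspose P₀,
    hP₀.isSelfAdjoint.star_eq]
  simp only [Matrix.mul_assoc]

theorem posSemidef_cutoff_seqEffect {P₀ : Matrix n n ℂ} (hP₀ : IsStarProjection P₀)
    (P : ℕ → Matrix n n ℂ) (k : ℕ) : (P₀ * seqEffect P k * P₀).PosSemidef := by
  have := (posSemidef_conjTranspose_mul_self (P k * residual P k)).conjTranspose_mul_mul_same P₀
  rwa [← star_eq_conjTranspose P₀, hP₀.isSelfAdjoint.star_eq] at this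

theorem posSemidef_one_sub_sum_cutoff_seqEffect {P₀ : Matrix n n ℂ} (hP₀ : IsStarProjection P₀)
    {P : ℕ → Matrix n n ℂ} (hP : ∀ k, IsStarProjection (P k)) (N : ℕ) :
    (1 - ∑ k ∈ Finset.range N, P₀ * seqEffect P k * P₀).PosSemidef := by
  have h_sum : 1 - ∑ k ∈ Finset.range N, P₀ * seqEffect P k * P₀ =
      (1 - P₀) + P₀ᴴ * ((residual P N)ᴴ * residual P N) * P₀ := by
    rw [← Finset.sum_mul, ← Finset.mul_sum, sum_range_seqEffect hP, ← star_eq_conjTranspose P₀,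
      hP₀.isSelfAdjoint.star_eq, Matrix.mul_sub, Matrix.sub_mul, Matrix.mul_one,
      hP₀.isIdempotentElem.eq]
    abel
  rw [h_sum]
  exact (posSemidef_of_isStarProjection hP₀.one_sub).add
    ((posSemidef_conjTranspose_mul_self _).conjTranspose_mul_mul_same P₀)

theorem one_sub_two_mul_sqrt_le_bornProb_seqEffect {P₀ : Matrix n n ℂ} (hP₀ : IsStarProjection P₀)
    {P : ℕ → Matrix n n ℂ} (hP : ∀ k, IsStarProjection (P k)) {σ : Matrix n n ℂ}
    (hσ : IsDensityMatrix σ) (i : ℕ) :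
    1 - 2 * √(6 * bornProb σ (1 - P₀) + 4 * bornProb σ (1 - P i) +
        2 * ∑ j ∈ Finset.range i, bornProb (P₀ * σ * P₀) (P j)) ≤
      bornProb σ (P₀ * seqEffect P i * P₀) := by
  obtain ⟨A, rfl⟩ := exists_eq_mul_conjTranspose hσ.1
  have norm_eq_one : ‖A‖ = 1 := by
    rw [← sq_eq_sq₀ (norm_nonneg A) zero_le_one, frobenius_norm_sq, trace_mul_comm, hσ.2]
    simp
  have cutoff_mul : P₀ * (A * Aᴴ) * P₀ = P₀ * A * (P₀ * A)ᴴ := by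
    rw [conjTranspose_mul, ← star_eq_conjTranspose P₀, hP₀.isSelfAdjoint.star_eq]
    simp only [Matrix.mul_assoc]
  rw [bornProb_cutoff_seqEffect hP₀, cutoff_mul]
  simp only [bornProb_of_isStarProjection hP₀.one_sub,
    bornProb_of_isStarProjection (hP _).one_sub, bornProb_of_isStarProjection (hP _)]
  exact one_sub_two_mul_sqrt_le_norm_sq norm_eq_one (norm_sub_mul_residual_mul_sq_le hP A i)

theorem exists_subPOVM_one_sub_packingError_le {N : ℕ} {P₀ : Matrix n n ℂ}
    (hP₀ : IsStarProjection P₀) {P : Fin N → Matrix n n ℂ} (hP : ∀ i, IsStarProjection (P i)) :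
    ∃ D : Fin N → Matrix n n ℂ, (∀ i, (D i).PosSemidef) ∧ (1 - ∑ i, D i).PosSemidef ∧
      ∀ σ, IsDensityMatrix σ → ∀ i, 1 - 2 * √(packingError P₀ P σ i) ≤ bornProb σ (D i) := by
  let P' : ℕ → Matrix n n ℂ := fun k => if h : k < N then P ⟨k, h⟩ else 0
  have P'_val (i : Fin N) : P' i = P i := by simp [P']
  have hP' (k : ℕ) : IsStarProjection (P' k) := by
    by_cases h : k < N
    · simpa [P', h] using hP ⟨k, h⟩
    · simp [P', h]
  refine ⟨fun i => P₀ * seqEffect P' i * P₀, fun i => posSemidef_cutoff_seqEffect hP₀ P' i, ?_,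
    fun σ hσ i => ?_⟩
  · simpa only [Finset.sum_range] using posSemidef_one_sub_sum_cutoff_seqEffect hP₀ hP' N
  · refine le_trans ?_ (one_sub_two_mul_sqrt_le_bornProb_seqEffect hP₀ hP' hσ i)
    have sum_range_eq : ∑ j ∈ Finset.range i, bornProb (P₀ * σ * P₀) (P' j) =
        ∑ j ∈ Finset.Iio i, bornProb (P₀ * σ * P₀) (P j) := by
      rw [← Nat.Iio_eq_range, ← Fin.map_valEmbedding_Iio, Finset.sum_map]
      simp [P'_val]
    rw [packingError, P'_val, sum_range_eq]
    gcongr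
    · exact fun j _ _ => bornProb_cutoff_nonneg hσ.1 hP₀ (hP j)
    · exact fun j hj => Finset.mem_erase.2 ⟨(Finset.mem_Iio.1 hj).ne, Finset.mem_univ j⟩

/-- The states `σ i`, taken with equal probabilities, are told apart by some sub-POVM with average
success probability at least `1 - ε`. -/
def IsDecodable {N : ℕ} (ε : ℝ) (σ : Fin N → Matrix n n ℂ) : Prop :=
  ∃ D : Fin N → Matrix n n ℂ, (∀ i, (D i).PosSemidef) ∧ (1 - ∑ i, D i).PosSemidef ∧
    1 - ε ≤ (N : ℝ)⁻¹ * ∑ i, bornProb (σ i) (D i)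

theorem isDecodable_of_sum_packingError_le {N : ℕ} [NeZero N] {ε : ℝ} (hε : 0 ≤ ε)
    {P₀ : Matrix n n ℂ} (hP₀ : IsStarProjection P₀) {P : Fin N → Matrix n n ℂ}
    (hP : ∀ i, IsStarProjection (P i)) {σ : Fin N → Matrix n n ℂ}
    (hσ : ∀ i, IsDensityMatrix (σ i))
    (h : ∑ i, packingError P₀ P (σ i) i ≤ N * (ε ^ 2 / 4)) : IsDecodable ε σ := by
  obtain ⟨D, hD, hD_sum, h_success⟩ := exists_subPOVM_one_sub_packingError_le hP₀ hP
  refine ⟨D, hD, hD_sum, ?_⟩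
  have hN : (0 : ℝ) < N := by exact_mod_cast NeZero.pos N
  have sum_sqrt_le : ∑ i, √(packingError P₀ P (σ i) i) ≤ N * (ε / 2) := by
    refine abs_le_of_sq_le_sq' ?_ (by positivity) |>.2
    calc (∑ i, √(packingError P₀ P (σ i) i)) ^ 2
        ≤ N * ∑ i, √(packingError P₀ P (σ i) i) ^ 2 := by
          simpa using sq_sum_le_card_mul_sum_sq (s := Finset.univ)
            (f := fun i => √(packingError P₀ P (σ i) i))
      _ = N * ∑ i, packingError P₀ P (σ i) i := by
          simp only [Real.sq_sqrt (packingError_nonneg (hσ _).1 hP₀ hP _)]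
      _ ≤ N * (N * (ε ^ 2 / 4)) := by gcongr
      _ = (N * (ε / 2)) ^ 2 := by ring
  have sum_success : ∑ i, (1 - 2 * √(packingError P₀ P (σ i) i)) ≤ ∑ i, bornProb (σ i) (D i) :=
    Finset.sum_le_sum fun i _ => h_success (σ i) (hσ i) i
  rw [Finset.sum_sub_distrib, ← Finset.mul_sum] at sum_success
  rw [le_inv_mul_iff₀ hN]
  simp only [Finset.sum_const, Finset.card_univ, Fintype.card_fin, nsmul_eq_mul] at sum_success
  linarith

end SequentialDecoding

section RandomCode

variable {ι Ω : Type*} [Fintype ι] [Fintype Ω]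

theorem one_sub_le_sum_filter_of_sum_mul_le {w B : Ω → ℝ} (hw : ∀ x, 0 ≤ w x)
    (hw_sum : ∑ x, w x = 1) (hB : ∀ x, 0 ≤ B x) {t ε : ℝ} (ht : 0 < t)
    (h : ∑ x, w x * B x ≤ ε * t) : 1 - ε ≤ ∑ x with B x ≤ t, w x := by
  have tail_le : (∑ x with ¬B x ≤ t, w x) * t ≤ ε * t := by
    rw [Finset.sum_mul]
    calc ∑ x with ¬B x ≤ t, w x * t
        ≤ ∑ x with ¬B x ≤ t, w x * B x := by
          refine Finset.sum_le_sum fun x hx => ?_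
          exact mul_le_mul_of_nonneg_left (not_le.1 (Finset.mem_filter.1 hx).2).le (hw x)
      _ ≤ ∑ x, w x * B x := Finset.sum_le_univ_sum_of_nonneg fun x => mul_nonneg (hw x) (hB x)
      _ ≤ ε * t := h
  have := Finset.sum_filter_add_sum_filter_not Finset.univ (B · ≤ t) w
  linarith [le_of_mul_le_mul_right tail_le ht]

theorem sum_prod_eq_one [DecidableEq ι] {Q : Ω → ℝ} (hQ_sum : ∑ u, Q u = 1) :
    ∑ U : ι → Ω, ∏ k, Q (U k) = 1 := by
  rw [← Fintype.prod_sum]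
  simp [hQ_sum]

theorem sum_prod_mul_eq_resample [DecidableEq ι] {Q : Ω → ℝ} (hQ_sum : ∑ u, Q u = 1)
    (F : (ι → Ω) → ℝ) (i : ι) :
    ∑ U : ι → Ω, (∏ k, Q (U k)) * F U =
      ∑ U : ι → Ω, (∏ k, Q (U k)) * ∑ u, Q u * F (Function.update U i u) := by
  let swap : (ι → Ω) × Ω → (ι → Ω) × Ω := fun x => (Function.update x.1 i x.2, x.1 i)
  have swap_involutive : Function.Involutive swap := fun x => by simp [swap]
  have weight_swap (x : (ι → Ω) × Ω) :
      (∏ k, Q ((swap x).1 k)) * Q (swap x).2 = (∏ k, Q (x.1 k)) * Q x.2 := by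
    rw [Fintype.prod_eq_mul_prod_compl i, Fintype.prod_eq_mul_prod_compl i fun k => Q (x.1 k)]
    have (k) (hk : k ∈ ({i}ᶜ : Finset ι)) : Q ((swap x).1 k) = Q (x.1 k) := by
      simp only [swap, Function.update_of_ne (by simpa using hk : k ≠ i)]
    rw [Finset.prod_congr rfl this]
    simp only [swap, Function.update_self]
    ring
  calc ∑ U : ι → Ω, (∏ k, Q (U k)) * F U
      = ∑ x : (ι → Ω) × Ω, (∏ k, Q (x.1 k)) * Q x.2 * F x.1 := by
        simp only [Fintype.sum_prod_type, ← Finset.sum_mul, ← Finset.mul_sum, hQ_sum, mul_one]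
    _ = ∑ x : (ι → Ω) × Ω, (∏ k, Q (x.1 k)) * Q x.2 * F (swap x).1 := by
        rw [← Equiv.sum_comp swap_involutive.toPerm]
        exact Finset.sum_congr rfl fun x _ => by
          rw [swap_involutive.coe_toPerm, weight_swap]
    _ = ∑ U : ι → Ω, (∏ k, Q (U k)) * ∑ u, Q u * F (Function.update U i u) := by
        simp only [Fintype.sum_prod_type, swap, Finset.mul_sum, mul_assoc]

variable {n : Type*} [Fintype n] [DecidableEq n]

-- Given the other codewords, the codeword `U i` enters only through the average state.
theorem sum_mul_packingError_update_le [DecidableEq ι] {Q : Ω → ℝ}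
    {σ : Ω → Matrix n n ℂ} {P₀ : Matrix n n ℂ} {P : Ω → Matrix n n ℂ} {η τ : ℝ} (hτ : 0 ≤ τ)
    (h_cutoff : ∑ u, Q u * bornProb (σ u) (1 - P₀) ≤ η)
    (h_own : ∑ u, Q u * bornProb (σ u) (1 - P u) ≤ η)
    (h_cross : ∀ v, bornProb (P₀ * (∑ u, (Q u : ℂ) • σ u) * P₀) (P v) ≤ τ) (U : ι → Ω) (i : ι) :
    ∑ u, Q u * packingError P₀ (fun j => P (Function.update U i u j)) (σ u) i ≤
      10 * η + 2 * (Fintype.card ι * τ) := by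
  have confusion_eq (u : Ω) :
      ∑ j ∈ Finset.univ.erase i, bornProb (P₀ * σ u * P₀) (P (Function.update U i u j)) =
        ∑ j ∈ Finset.univ.erase i, bornProb (P₀ * σ u * P₀) (P (U j)) :=
    Finset.sum_congr rfl fun j hj => by rw [Function.update_of_ne (Finset.ne_of_mem_erase hj)]
  have average_confusion (v : Ω) : ∑ u, Q u * bornProb (P₀ * σ u * P₀) (P v) ≤ τ := by
    refine le_of_eq_of_le ?_ (h_cross v)
    simp only [bornProb_conj, sum_mul_bornProb]
  have h_confusion : ∑ u, Q u * ∑ j ∈ Finset.univ.erase i, bornProb (P₀ * σ u * P₀) (P (U j)) ≤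
      Fintype.card ι * τ := by
    simp only [Finset.mul_sum]
    rw [Finset.sum_comm]
    calc ∑ j ∈ Finset.univ.erase i, ∑ u, Q u * bornProb (P₀ * σ u * P₀) (P (U j))
        ≤ ∑ _j ∈ Finset.univ.erase i, τ := Finset.sum_le_sum fun j _ => average_confusion (U j)
      _ ≤ ∑ _j : ι, τ :=
          Finset.sum_le_sum_of_subset_of_nonneg (Finset.subset_univ _) fun _ _ _ => hτ
      _ = Fintype.card ι * τ := by simp
  simp only [packingError, Function.update_self, confusion_eq, mul_add, mul_left_comm (Q _),
    Finset.sum_add_distrib, ← Finset.mul_sum]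
  linarith

open scoped Classical in
theorem one_sub_le_sum_filter_isDecodable {N : ℕ} [NeZero N] {Q : Ω → ℝ} (hQ : ∀ u, 0 ≤ Q u)
    (hQ_sum : ∑ u, Q u = 1) {σ : Ω → Matrix n n ℂ} (hσ : ∀ u, IsDensityMatrix (σ u))
    {P₀ : Matrix n n ℂ} (hP₀ : IsStarProjection P₀) {P : Ω → Matrix n n ℂ}
    (hP : ∀ u, IsStarProjection (P u)) {η τ ε : ℝ} (hτ : 0 ≤ τ) (hε : 0 < ε)
    (h_cutoff : ∑ u, Q u * bornProb (σ u) (1 - P₀) ≤ η)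
    (h_own : ∑ u, Q u * bornProb (σ u) (1 - P u) ≤ η)
    (h_cross : ∀ v, bornProb (P₀ * (∑ u, (Q u : ℂ) • σ u) * P₀) (P v) ≤ τ)
    (h_total : 10 * η + 2 * (N * τ) ≤ ε ^ 3 / 4) :
    1 - ε ≤ ∑ U : Fin N → Ω with IsDecodable ε (fun i => σ (U i)), ∏ i, Q (U i) := by
  have hN : (0 : ℝ) < N := by exact_mod_cast NeZero.pos N
  let B : (Fin N → Ω) → ℝ := fun U => ∑ i, packingError P₀ (fun j => P (U j)) (σ (U i)) i
  have weight_nonneg (U : Fin N → Ω) : 0 ≤ ∏ i, Q (U i) := Finset.prod_nonneg fun i _ => hQ _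
  have B_nonneg (U : Fin N → Ω) : 0 ≤ B U :=
    Finset.sum_nonneg fun i _ => packingError_nonneg (hσ _).1 hP₀ (fun j => hP _) i
  have mean_packingError (i : Fin N) :
      ∑ U : Fin N → Ω, (∏ k, Q (U k)) * packingError P₀ (fun j => P (U j)) (σ (U i)) i ≤
        ε ^ 3 / 4 := by
    rw [sum_prod_mul_eq_resample hQ_sum _ i]
    calc _ ≤ ∑ U : Fin N → Ω, (∏ k, Q (U k)) * (10 * η + 2 * (N * τ)) := by
          refine Finset.sum_le_sum fun U _ => mul_le_mul_of_nonneg_left ?_ (weight_nonneg U)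
          simpa using sum_mul_packingError_update_le hτ h_cutoff h_own h_cross U i
      _ ≤ ε ^ 3 / 4 := by rwa [← Finset.sum_mul, sum_prod_eq_one hQ_sum, one_mul]
  have mean_B : ∑ U : Fin N → Ω, (∏ k, Q (U k)) * B U ≤ ε * (N * (ε ^ 2 / 4)) := by
    simp only [B, Finset.mul_sum]
    rw [Finset.sum_comm]
    refine (Finset.sum_le_card_nsmul _ _ _ fun i _ => mean_packingError i).trans_eq ?_
    rw [Finset.card_univ, Fintype.card_fin, nsmul_eq_mul]
    ring
  refine (one_sub_le_sum_filter_of_sum_mul_le weight_nonneg (sum_prod_eq_one hQ_sum) B_nonneg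
    (by positivity) mean_B).trans ?_
  refine Finset.sum_le_sum_of_subset_of_nonneg (fun U hU => ?_) fun U _ _ => weight_nonneg U
  exact Finset.mem_filter.2 ⟨Finset.mem_univ U, isDecodable_of_sum_packingError_le hε.le hP₀
    (fun j => hP _) (fun i => hσ _) (Finset.mem_filter.1 hU).2⟩

end RandomCode

section WeakLaw

open MeasureTheory ProbabilityTheory

theorem measureReal_pi_le_abs_sum_sub_le {ι Ω : Type*} [Fintype ι] [MeasurableSpace Ω]
    {μ : Measure Ω} [IsProbabilityMeasure μ] {X : Ω → ℝ} (hX : MemLp X 2 μ) {c : ℝ}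
    (hc : 0 < c) :
    (Measure.pi fun _ : ι => μ).real {x | c ≤ |∑ t, X (x t) - Fintype.card ι * μ[X]|} ≤
      Fintype.card ι * Var[X; μ] / c ^ 2 := by
  have memLp_eval (t : ι) : MemLp (fun x : ι → Ω => X (x t)) 2 (Measure.pi fun _ => μ) :=
    hX.comp_measurePreserving (measurePreserving_eval _ t)
  have mean_eq : ∫ x : ι → Ω, ∑ t, X (x t) ∂Measure.pi (fun _ => μ) =
      Fintype.card ι * μ[X] := by
    rw [integral_finsetSum _ fun t _ => (memLp_eval t).integrable one_le_two]
    simp [integral_comp_eval (μ := fun _ : ι => μ) hX.1]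
  have variance_eq : Var[fun x : ι → Ω => ∑ t, X (x t); Measure.pi fun _ => μ] =
      Fintype.card ι * Var[X; μ] := by
    simpa [Finset.sum_fn] using variance_sum_pi (μ := fun _ : ι => μ) (X := fun _ => X) fun _ => hX
  have chebyshev := meas_ge_le_variance_div_sq
    (memLp_finsetSum Finset.univ fun t (_ : t ∈ Finset.univ) => memLp_eval t) hc
  rw [mean_eq, variance_eq] at chebyshev
  exact ENNReal.toReal_le_of_le_ofReal (by have := variance_nonneg X μ; positivity) chebyshev

variable {Ω : Type*} [Fintype Ω]

theorem eventually_one_sub_le_sum_filter_abs_sum_sub_lt {p : Ω → ℝ} (hp : ∀ ω, 0 ≤ p ω)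
    (hp_sum : ∑ ω, p ω = 1) (X : Ω → ℝ) {δ η : ℝ} (hδ : 0 < δ) (hη : 0 < η) :
    ∀ᶠ n : ℕ in atTop, 1 - η ≤
      ∑ x : Fin n → Ω with |∑ t, X (x t) - n * ∑ ω, p ω * X ω| < n * δ, ∏ t, p (x t) := by
  let mΩ : MeasurableSpace Ω := ⊤
  let P : PMF Ω := PMF.ofFintype (fun ω => ENNReal.ofReal (p ω)) (by
    rw [← ENNReal.ofReal_sum_of_nonneg fun ω _ => hp ω, hp_sum, ENNReal.ofReal_one])
  have mean_eq : ∫ ω, X ω ∂P.toMeasure = ∑ ω, p ω * X ω := by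
    simp [PMF.integral_eq_sum, P, hp]
  have singleton_eq (ω : Ω) : P.toMeasure.real {ω} = p ω := by
    rw [measureReal_def, PMF.toMeasure_apply_singleton _ _ (.singleton ω), PMF.ofFintype_apply,
      ENNReal.toReal_ofReal (hp ω)]
  have pi_singleton (n : ℕ) (x : Fin n → Ω) :
      (Measure.pi fun _ => P.toMeasure).real {x} = ∏ t, p (x t) := by
    rw [measureReal_def, Measure.pi_singleton, ENNReal.toReal_prod]
    exact Finset.prod_congr rfl fun t _ => singleton_eq (x t)
  have tail_tendsto : Tendsto (fun n : ℕ => Var[X; P.toMeasure] / δ ^ 2 / n) atTop (𝓝 0) :=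
    tendsto_const_div_atTop_nhds_zero_nat _
  filter_upwards [tail_tendsto.eventually_le_const hη, eventually_gt_atTop 0] with n tail_le hn
  have hn' : (0 : ℝ) < n := by exact_mod_cast hn
  have chebyshev := measureReal_pi_le_abs_sum_sub_le (ι := Fin n)
    (MemLp.of_discrete : MemLp X 2 P.toMeasure) (mul_pos hn' hδ)
  rw [mean_eq, Fintype.card_fin] at chebyshev
  simp only [← pi_singleton]
  rw [sum_measureReal_singleton, sub_le_comm, ← probReal_compl_eq_one_sub (.of_discrete)]
  refine le_trans (le_of_eq_of_le ?_ (chebyshev.trans_eq ?_)) tail_le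
  · congr 1
    ext x
    simp
  · field_simp

end WeakLaw

section TypicalSet

variable {Ω : Type*} [Fintype Ω]

/-- The words of length `n` whose weight under the product of the weights `g` is
`2 ^ (-n * h)` up to a factor `2 ^ (± n * δ)`. -/
noncomputable def typicalSet (g : Ω → ℝ) (h δ : ℝ) (n : ℕ) : Finset (Fin n → Ω) :=
  {x | (2 : ℝ) ^ (-(n * (h + δ))) ≤ ∏ t, g (x t) ∧ ∏ t, g (x t) ≤ (2 : ℝ) ^ (-(n * (h - δ)))}

theorem mem_typicalSet_of_abs_sum_sub_lt {g : Ω → ℝ} {h δ : ℝ} {n : ℕ} {x : Fin n → Ω}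
    (hg : ∀ t, 0 < g (x t)) (hx : |∑ t, -Real.logb 2 (g (x t)) - n * h| < n * δ) :
    x ∈ typicalSet g h δ n := by
  have prod_pos : 0 < ∏ t, g (x t) := Finset.prod_pos fun t _ => hg t
  rw [Finset.sum_neg_distrib, ← Real.logb_prod _ _ fun t _ => (hg t).ne', abs_lt] at hx
  refine Finset.mem_filter.2 ⟨Finset.mem_univ x, ?_, ?_⟩
  · rw [← Real.le_logb_iff_rpow_le one_lt_two prod_pos]
    linarith
  · rw [← Real.logb_le_iff_le_rpow one_lt_two prod_pos]
    linarith

theorem eventually_one_sub_le_sum_typicalSet {p g : Ω → ℝ} (hp : ∀ ω, 0 ≤ p ω)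
    (hp_sum : ∑ ω, p ω = 1) (hg : ∀ ω, p ω ≠ 0 → 0 < g ω) {δ η : ℝ} (hδ : 0 < δ) (hη : 0 < η) :
    ∀ᶠ n : ℕ in atTop, 1 - η ≤
      ∑ x ∈ typicalSet g (∑ ω, p ω * -Real.logb 2 (g ω)) δ n, ∏ t, p (x t) := by
  filter_upwards [eventually_one_sub_le_sum_filter_abs_sum_sub_lt hp hp_sum
    (fun ω => -Real.logb 2 (g ω)) hδ hη] with n hn
  refine hn.trans ?_
  rw [← Finset.sum_filter_ne_zero]
  refine Finset.sum_le_sum_of_subset_of_nonneg (fun x hx => ?_)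
    fun x _ _ => Finset.prod_nonneg fun t _ => hp _
  obtain ⟨hx, prod_ne_zero⟩ := Finset.mem_filter.1 hx
  exact mem_typicalSet_of_abs_sum_sub_lt
    (fun t => hg _ (Finset.prod_ne_zero_iff.1 prod_ne_zero t (Finset.mem_univ t)))
    (Finset.mem_filter.1 hx).2

end TypicalSet

section Spectral

variable {n : Type*} [Fintype n]

theorem isDensityMatrix_sum_smul {Ω : Type*} [Fintype Ω] {q : Ω → ℝ} (hq : ∀ j, 0 ≤ q j)
    (hq_sum : ∑ j, q j = 1) {W : Ω → Matrix n n ℂ} (hW : ∀ j, IsDensityMatrix (W j)) :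
    IsDensityMatrix (∑ j, (q j : ℂ) • W j) where
  left := posSemidef_sum _ fun j _ => (hW j).1.smul (Complex.zero_le_real.2 (hq j))
  right := by
    simp only [trace_sum, trace_smul, (hW _).2, smul_eq_mul, mul_one]
    exact_mod_cast hq_sum

variable [DecidableEq n]

/-- The Hermitian matrix with eigenvalues `c` whose eigenvectors are the columns of `V`. -/
noncomputable def conjDiagonal (V : unitaryGroup n ℂ) (c : n → ℝ) : Matrix n n ℂ :=
  Unitary.conjStarAlgAut ℂ _ V (diagonal fun i => (c i : ℂ))

theorem conjDiagonal_mul (V : unitaryGroup n ℂ) (c c' : n → ℝ) :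
    conjDiagonal V c * conjDiagonal V c' = conjDiagonal V (c * c') := by
  simp [conjDiagonal, ← map_mul, -Unitary.conjStarAlgAut_apply]

theorem conjDiagonal_sub (V : unitaryGroup n ℂ) (c c' : n → ℝ) :
    conjDiagonal V c - conjDiagonal V c' = conjDiagonal V (c - c') := by
  simp [conjDiagonal, ← map_sub, -Unitary.conjStarAlgAut_apply]

theorem conjDiagonal_const (V : unitaryGroup n ℂ) (τ : ℝ) :
    conjDiagonal V (fun _ => τ) = (τ : ℂ) • 1 := by
  rw [conjDiagonal, ← smul_one_eq_diagonal, map_smul, map_one]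

theorem conjTranspose_conjDiagonal (V : unitaryGroup n ℂ) (c : n → ℝ) :
    (conjDiagonal V c)ᴴ = conjDiagonal V c := by
  rw [conjDiagonal, ← star_eq_conjTranspose, ← map_star, star_eq_conjTranspose,
    diagonal_conjTranspose]
  congr 3
  ext i
  simp

theorem trace_conjDiagonal (V : unitaryGroup n ℂ) (c : n → ℝ) :
    (conjDiagonal V c).trace = ((∑ i, c i : ℝ) : ℂ) := by
  rw [conjDiagonal, Unitary.conjStarAlgAut_apply, trace_mul_cycle, Unitary.coe_star_mul_self,
    Matrix.one_mul, trace_diagonal, Complex.ofReal_sum]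

theorem posSemidef_conjDiagonal (V : unitaryGroup n ℂ) {c : n → ℝ} (hc : ∀ i, 0 ≤ c i) :
    (conjDiagonal V c).PosSemidef :=
  (PosSemidef.diagonal fun i => Complex.zero_le_real.2 (hc i)).mul_mul_conjTranspose_same V.1

/-- `V` and `l` form a spectral decomposition of the density matrix `ρ`: its eigenvectors are the
columns of `V`, and the eigenvalues `l` are a probability distribution. -/
structure IsSpectralDecomposition (V : unitaryGroup n ℂ) (l : n → ℝ) (ρ : Matrix n n ℂ) :
    Prop where
  nonneg : ∀ i, 0 ≤ l i
  sum_eq_one : ∑ i, l i = 1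
  eq_conjDiagonal : ρ = conjDiagonal V l

theorem IsSpectralDecomposition.isDensityMatrix {V : unitaryGroup n ℂ} {l : n → ℝ}
    {ρ : Matrix n n ℂ} (h : IsSpectralDecomposition V l ρ) : IsDensityMatrix ρ where
  left := h.eq_conjDiagonal ▸ posSemidef_conjDiagonal V h.nonneg
  right := by rw [h.eq_conjDiagonal, trace_conjDiagonal, h.sum_eq_one, Complex.ofReal_one]

theorem exists_isSpectralDecomposition {ρ : Matrix n n ℂ} (hρ : IsDensityMatrix ρ) :
    ∃ V l, IsSpectralDecomposition V l ρ ∧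
      vnEntropy ρ = ∑ i, l i * -Real.logb 2 (l i) := by
  have h_hermitian := hρ.1.isHermitian
  have h_spectral : ρ = conjDiagonal h_hermitian.eigenvectorUnitary h_hermitian.eigenvalues :=
    h_hermitian.spectral_theorem
  refine ⟨_, _, ⟨hρ.1.eigenvalues_nonneg, ?_, h_spectral⟩, ?_⟩
  · have h_trace := congrArg trace h_spectral
    rw [hρ.2, trace_conjDiagonal] at h_trace
    exact_mod_cast h_trace.symm
  · simp [vnEntropy, h_hermitian]

/-- The orthogonal projection onto the span of the columns of `V` with index in `T`. -/
noncomputable def specProj (V : unitaryGroup n ℂ) (T : Finset n) : Matrix n n ℂ :=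
  conjDiagonal V (Set.indicator T 1)

theorem isStarProjection_specProj (V : unitaryGroup n ℂ) (T : Finset n) :
    IsStarProjection (specProj V T) where
  isIdempotentElem := by
    rw [IsIdempotentElem, specProj, conjDiagonal_mul]
    congr 1
    ext i
    by_cases hi : i ∈ T <;> simp [hi]
  isSelfAdjoint := conjTranspose_conjDiagonal V _

theorem trace_specProj (V : unitaryGroup n ℂ) (T : Finset n) :
    (specProj V T).trace.re = T.card := by
  rw [specProj, trace_conjDiagonal, Complex.ofReal_re]
  simp [Set.indicator_apply]

theorem bornProb_conjDiagonal_specProj (V : unitaryGroup n ℂ) (l : n → ℝ) (T : Finset n) :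
    bornProb (conjDiagonal V l) (specProj V T) = ∑ i ∈ T, l i := by
  rw [bornProb, specProj, conjDiagonal_mul, trace_conjDiagonal, Complex.ofReal_re]
  simp [Set.indicator_apply]

theorem bornProb_conjDiagonal_le (V : unitaryGroup n ℂ) {c : n → ℝ} {τ : ℝ} (hc : ∀ i, c i ≤ τ)
    {E : Matrix n n ℂ} (hE : E.PosSemidef) : bornProb (conjDiagonal V c) E ≤ τ * E.trace.re := by
  have gap_nonneg := bornProb_nonneg
    (posSemidef_conjDiagonal V fun i => sub_nonneg.2 (hc i) : (conjDiagonal V (_ - c)).PosSemidef)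
    hE
  rw [← conjDiagonal_sub, conjDiagonal_const] at gap_nonneg
  simpa [bornProb, sub_mul] using gap_nonneg

theorem bornProb_cutoff_specProj_le (V V' : unitaryGroup n ℂ) {l : n → ℝ} {T T' : Finset n}
    {τ : ℝ} (hτ : 0 ≤ τ) (hl : ∀ i ∈ T, l i ≤ τ) :
    bornProb (specProj V T * conjDiagonal V l * specProj V T) (specProj V' T') ≤
      τ * T'.card := by
  rw [specProj, conjDiagonal_mul, conjDiagonal_mul, ← trace_specProj V']
  refine bornProb_conjDiagonal_le V (fun i => ?_)
    (posSemidef_of_isStarProjection (isStarProjection_specProj V' T'))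
  by_cases hi : i ∈ T <;> simp [hi, hl, hτ]

end Spectral

section TensorProduct

/-- The tensor product over `t` of the matrices `M t`, as a matrix indexed by tuples. -/
def tensorProd {ι κ R : Type*} [Fintype ι] [CommMonoid R] (M : ι → Matrix κ κ R) :
    Matrix (ι → κ) (ι → κ) R :=
  of fun J K => ∏ t, M t (J t) (K t)

section Ring

variable {ι κ R : Type*} [Fintype ι] [CommSemiring R]

theorem tensorProd_mul [DecidableEq ι] [Fintype κ] (M M' : ι → Matrix κ κ R) :
    tensorProd M * tensorProd M' = tensorProd fun t => M t * M' t := by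
  ext J K
  simp only [tensorProd, of_apply, mul_apply, Fintype.prod_sum, Finset.prod_mul_distrib]

theorem star_tensorProd [StarRing R] (M : ι → Matrix κ κ R) :
    star (tensorProd M) = tensorProd fun t => star (M t) := by
  ext J K
  simp only [tensorProd, star_apply, of_apply, star_prod]

theorem tensorProd_diagonal [DecidableEq κ] (c : ι → κ → R) :
    tensorProd (fun t => diagonal (c t)) = diagonal fun J => ∏ t, c t (J t) := by
  ext J K
  by_cases h : J = K
  · simp [tensorProd, h]
  · obtain ⟨t, ht⟩ := Function.ne_iff.1 h
    rw [diagonal_apply_ne _ h]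
    exact Finset.prod_eq_zero (Finset.mem_univ t) (diagonal_apply_ne _ ht)

theorem tensorProd_one [DecidableEq κ] :
    tensorProd (fun _ : ι => (1 : Matrix κ κ R)) = 1 := by
  simp only [← diagonal_one, tensorProd_diagonal, Finset.prod_const_one]

theorem sum_smul_tensorProd {Ω : Type*} [Fintype Ω] [DecidableEq ι] (q : Ω → R)
    (W : Ω → Matrix κ κ R) :
    ∑ u : ι → Ω, (∏ t, q (u t)) • tensorProd (fun t => W (u t)) =
      tensorProd fun _ => ∑ j, q j • W j := by
  ext J K
  simp only [tensorProd, Matrix.sum_apply, Matrix.smul_apply, of_apply, smul_eq_mul,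
    Fintype.prod_sum, Finset.prod_mul_distrib]

end Ring

variable {ι κ : Type*} [Fintype ι] [DecidableEq ι] [Fintype κ] [DecidableEq κ]

/-- The tensor product of a family of unitary matrices, as a unitary matrix. -/
def tensorUnitary (V : ι → unitaryGroup κ ℂ) : unitaryGroup (ι → κ) ℂ :=
  ⟨tensorProd fun t => (V t : Matrix κ κ ℂ), by
    rw [mem_unitaryGroup_iff, star_tensorProd, tensorProd_mul]
    exact (congrArg tensorProd (funext fun t => Unitary.mul_star_self_of_mem (V t).2)).trans
      tensorProd_one⟩

theorem tensorProd_conjDiagonal (V : ι → unitaryGroup κ ℂ) (c : ι → κ → ℝ) :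
    tensorProd (fun t => conjDiagonal (V t) (c t)) =
      conjDiagonal (tensorUnitary V) fun J => ∏ t, c t (J t) := by
  have diagonal_eq : diagonal (fun J : ι → κ => ((∏ t, c t (J t) : ℝ) : ℂ)) =
      tensorProd fun t => diagonal fun i => (c t i : ℂ) := by
    simp only [tensorProd_diagonal, Complex.ofReal_prod]
  rw [conjDiagonal, diagonal_eq, Unitary.conjStarAlgAut_apply, tensorUnitary, star_tensorProd,
    tensorProd_mul, tensorProd_mul]
  rfl

theorem IsSpectralDecomposition.tensorProd {V : ι → unitaryGroup κ ℂ} {l : ι → κ → ℝ}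
    {M : ι → Matrix κ κ ℂ} (h : ∀ t, IsSpectralDecomposition (V t) (l t) (M t)) :
    IsSpectralDecomposition (tensorUnitary V) (fun J => ∏ t, l t (J t)) (tensorProd M) where
  nonneg J := Finset.prod_nonneg fun t _ => (h t).nonneg (J t)
  sum_eq_one := by
    rw [← Fintype.prod_sum]
    exact Finset.prod_eq_one fun t _ => (h t).sum_eq_one
  eq_conjDiagonal := by
    rw [← tensorProd_conjDiagonal, funext fun t => (h t).eq_conjDiagonal]

end TensorProduct

section Coding

variable {α κ : Type*} [Fintype α] [Fintype κ]

open scoped Classical in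
/-- The words `J` of eigenvalue indices that are jointly typical with the input word `u`, where
`l j` is the spectrum of the `j`-th output state. -/
noncomputable def condTypicalSet (l : α → κ → ℝ) (h δ : ℝ) {n : ℕ} (u : Fin n → α) :
    Finset (Fin n → κ) :=
  {J | (fun t => (u t, J t)) ∈ typicalSet (fun x : α × κ => l x.1 x.2) h δ n}

theorem card_condTypicalSet_le {l : α → κ → ℝ} (hl : ∀ j i, 0 ≤ l j i)
    (hl_sum : ∀ j, ∑ i, l j i = 1) (h δ : ℝ) {n : ℕ} (u : Fin n → α) :
    ((condTypicalSet l h δ u).card : ℝ) ≤ 2 ^ (n * (h + δ)) := by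
  have card_mul_le : (condTypicalSet l h δ u).card * (2 : ℝ) ^ (-(n * (h + δ))) ≤ 1 :=
    calc (condTypicalSet l h δ u).card * (2 : ℝ) ^ (-(n * (h + δ)))
        ≤ ∑ J ∈ condTypicalSet l h δ u, ∏ t, l (u t) (J t) := by
          rw [← nsmul_eq_mul]
          refine Finset.card_nsmul_le_sum _ _ _ fun J hJ => ?_
          simp only [condTypicalSet, typicalSet, Finset.mem_filter_univ] at hJ
          exact hJ.1
      _ ≤ ∑ J : Fin n → κ, ∏ t, l (u t) (J t) :=
          Finset.sum_le_univ_sum_of_nonneg fun J => Finset.prod_nonneg fun t _ => hl _ _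
      _ = 1 := by
          rw [← Fintype.prod_sum]
          exact Finset.prod_eq_one fun t _ => hl_sum (u t)
  rwa [Real.rpow_neg zero_le_two, mul_inv_le_iff₀ (by positivity), one_mul] at card_mul_le

theorem sum_mul_sum_condTypicalSet (q : α → ℝ) (l : α → κ → ℝ) (h δ : ℝ) (n : ℕ) :
    ∑ u : Fin n → α, (∏ t, q (u t)) * ∑ J ∈ condTypicalSet l h δ u, ∏ t, l (u t) (J t) =
      ∑ x ∈ typicalSet (fun x : α × κ => l x.1 x.2) h δ n,
        ∏ t, (q (x t).1 * l (x t).1 (x t).2) := by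
  classical
  rw [← Finset.filter_univ_mem (typicalSet _ h δ n), Finset.sum_filter,
    ← (Equiv.arrowProdEquivProdArrow (Fin n) (fun _ => α) (fun _ => κ)).symm.sum_comp,
    Fintype.sum_prod_type]
  refine Finset.sum_congr rfl fun u _ => ?_
  rw [condTypicalSet, Finset.mul_sum, Finset.sum_filter]
  exact Finset.sum_congr rfl fun J _ => by rw [← Finset.prod_mul_distrib]; rfl

variable [DecidableEq κ]

/-- The Holevo information of the ensemble of the states `W j` with probabilities `q j`. -/
noncomputable def holevoInformation (q : α → ℝ) (W : α → Matrix κ κ ℂ) : ℝ :=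
  vnEntropy (∑ j, (q j : ℂ) • W j) - ∑ j, q j * vnEntropy (W j)

variable {q : α → ℝ} {W : α → Matrix κ κ ℂ}

open scoped Classical in
theorem one_sub_le_sum_filter_isDecodable_tensorProd (hq : ∀ j, 0 ≤ q j) (hq_sum : ∑ j, q j = 1)
    {V : α → unitaryGroup κ ℂ} {l : α → κ → ℝ} (hW : ∀ j, IsSpectralDecomposition (V j) (l j) (W j))
    {V₀ : unitaryGroup κ ℂ} {l₀ : κ → ℝ}
    (h_avg : IsSpectralDecomposition V₀ l₀ (∑ j, (q j : ℂ) • W j)) {s h δ η ε : ℝ} (hε : 0 < ε)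
    {n N : ℕ} [NeZero N] (h_typ : 1 - η ≤ ∑ J ∈ typicalSet l₀ s δ n, ∏ t, l₀ (J t))
    (h_cond : 1 - η ≤ ∑ x ∈ typicalSet (fun x : α × κ => l x.1 x.2) h δ n,
      ∏ t, (q (x t).1 * l (x t).1 (x t).2))
    (h_total : 10 * η + 2 * (N * ((2 : ℝ) ^ (-(n * (s - δ))) * 2 ^ (n * (h + δ)))) ≤ ε ^ 3 / 4) :
    1 - ε ≤ ∑ U : Fin N → Fin n → α with
      IsDecodable ε (fun i => tensorProd fun t => W (U i t)), ∏ i, ∏ t, q (U i t) := by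
  have word_decomp (u : Fin n → α) := IsSpectralDecomposition.tensorProd fun t => hW (u t)
  have avg_decomp := IsSpectralDecomposition.tensorProd fun _ : Fin n => h_avg
  have weight_nonneg (u : Fin n → α) : 0 ≤ ∏ t, q (u t) := Finset.prod_nonneg fun t _ => hq _
  have weight_sum : ∑ u : Fin n → α, ∏ t, q (u t) = 1 := sum_prod_eq_one hq_sum
  have avg_eq : ∑ u : Fin n → α, ((∏ t, q (u t) : ℝ) : ℂ) • tensorProd (fun t => W (u t)) =
      tensorProd fun _ => ∑ j, (q j : ℂ) • W j := by
    simpa only [Complex.ofReal_prod] using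
      sum_smul_tensorProd (ι := Fin n) (fun j => (q j : ℂ)) W
  refine one_sub_le_sum_filter_isDecodable weight_nonneg weight_sum
    (fun u => (word_decomp u).isDensityMatrix)
    (isStarProjection_specProj (tensorUnitary fun _ => V₀) (typicalSet l₀ s δ n))
    (fun u => isStarProjection_specProj (tensorUnitary fun t => V (u t)) (condTypicalSet l h δ u))
    (by positivity) hε ?cutoff ?own ?cross h_total
  case cutoff =>
    rw [sum_mul_bornProb, avg_eq, bornProb_one_sub avg_decomp.isDensityMatrix,
      avg_decomp.eq_conjDiagonal, bornProb_conjDiagonal_specProj]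
    linarith
  case own =>
    have own_eq (u : Fin n → α) : bornProb (tensorProd fun t => W (u t))
        (1 - specProj (tensorUnitary fun t => V (u t)) (condTypicalSet l h δ u)) =
          1 - ∑ J ∈ condTypicalSet l h δ u, ∏ t, l (u t) (J t) := by
      rw [bornProb_one_sub (word_decomp u).isDensityMatrix, (word_decomp u).eq_conjDiagonal,
        bornProb_conjDiagonal_specProj]
    simp only [own_eq, mul_sub, mul_one, Finset.sum_sub_distrib, weight_sum,
      sum_mul_sum_condTypicalSet]
    linarith
  case cross =>
    intro v
    rw [avg_eq, avg_decomp.eq_conjDiagonal]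
    refine (bornProb_cutoff_specProj_le _ _ (by positivity) fun J hJ => ?_).trans
      (mul_le_mul_of_nonneg_left (card_condTypicalSet_le (fun j => (hW j).nonneg)
        (fun j => (hW j).sum_eq_one) h δ v) (by positivity))
    exact (Finset.mem_filter.1 hJ).2.2

theorem eventually_forall_mul_rpow_le (s h : ℝ) {δ η : ℝ} (hδ : 0 < δ) (hη : 0 < η) :
    ∀ᶠ n : ℕ in atTop, ∀ N : ℕ, 1 ≤ N → Real.logb 2 N ≤ n * (s - h - δ) →
      N * ((2 : ℝ) ^ (-(n * (s - δ / 4))) * 2 ^ (n * (h + δ / 4))) ≤ η := by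
  have decay : Tendsto (fun n : ℕ => ((2 : ℝ) ^ (-(δ / 2))) ^ n) atTop (𝓝 0) :=
    tendsto_pow_atTop_nhds_zero_of_lt_one (by positivity)
      (Real.rpow_lt_one_of_one_lt_of_neg one_lt_two (by linarith))
  filter_upwards [decay.eventually_le_const hη] with n hn N hN hlog
  have N_le : (N : ℝ) ≤ 2 ^ (n * (s - h - δ)) :=
    (Real.logb_le_iff_le_rpow one_lt_two (by exact_mod_cast hN)).1 hlog
  calc N * ((2 : ℝ) ^ (-(n * (s - δ / 4))) * 2 ^ (n * (h + δ / 4)))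
      ≤ 2 ^ (n * (s - h - δ)) * ((2 : ℝ) ^ (-(n * (s - δ / 4))) * 2 ^ (n * (h + δ / 4))) := by
        gcongr
    _ = ((2 : ℝ) ^ (-(δ / 2))) ^ n := by
        rw [← Real.rpow_add two_pos, ← Real.rpow_add two_pos, ← Real.rpow_mul_natCast zero_le_two]
        ring_nf
    _ ≤ η := hn

end Coding

end HSW

open HSW in
open scoped Classical in
theorem hsw_random_coding_general {α κ : Type*} [Fintype α] [Fintype κ] [DecidableEq κ]
    {W : α → Matrix κ κ ℂ} (hW : ∀ j, IsDensityMatrix (W j)) {q : α → ℝ} (hq : ∀ j, 0 ≤ q j)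
    (hqs : ∑ j, q j = 1) {ε δ : ℝ} (hε : 0 < ε) (hδ : 0 < δ) :
    ∃ n₀ : ℕ, ∀ n, n₀ ≤ n → ∀ N : ℕ, 1 ≤ N →
      Real.logb 2 N ≤ n * (holevoInformation q W - δ) →
      1 - ε ≤ ∑ U : Fin N → Fin n → α with
        IsDecodable ε (fun i => tensorProd fun t => W (U i t)), ∏ i, ∏ t, q (U i t) := by
  choose V l h_decomp h_entropy using fun j => exists_isSpectralDecomposition (hW j)
  obtain ⟨V₀, l₀, avg_decomp, avg_entropy⟩ :=
    exists_isSpectralDecomposition (isDensityMatrix_sum_smul hq hqs hW)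
  have joint_nonneg (x : α × κ) : 0 ≤ q x.1 * l x.1 x.2 :=
    mul_nonneg (hq _) ((h_decomp _).nonneg _)
  have joint_sum : ∑ x : α × κ, q x.1 * l x.1 x.2 = 1 := by
    simp only [Fintype.sum_prod_type, ← Finset.mul_sum, (h_decomp _).sum_eq_one, mul_one, hqs]
  have cond_entropy : ∑ j, q j * vnEntropy (W j) =
      ∑ x : α × κ, q x.1 * l x.1 x.2 * -Real.logb 2 (l x.1 x.2) := by
    simp only [h_entropy, Fintype.sum_prod_type, Finset.mul_sum, mul_assoc]
  have h_typ := eventually_one_sub_le_sum_typicalSet (η := ε ^ 3 / 80) avg_decomp.nonneg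
    avg_decomp.sum_eq_one (fun i hi => (avg_decomp.nonneg i).lt_of_ne' hi)
    (by positivity : 0 < δ / 4) (by positivity)
  have h_cond := eventually_one_sub_le_sum_typicalSet (η := ε ^ 3 / 80) joint_nonneg joint_sum
    (g := fun x => l x.1 x.2)
    (fun x hx => ((h_decomp x.1).nonneg x.2).lt_of_ne' (right_ne_zero_of_mul hx))
    (by positivity : 0 < δ / 4) (by positivity)
  have h_rate := eventually_forall_mul_rpow_le (vnEntropy (∑ j, (q j : ℂ) • W j))
    (∑ j, q j * vnEntropy (W j)) hδ (by positivity : 0 < ε ^ 3 / 16)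
  rw [← avg_entropy] at h_typ
  rw [← cond_entropy] at h_cond
  obtain ⟨n₀, hn₀⟩ := Filter.eventually_atTop.1 (h_typ.and (h_cond.and h_rate))
  refine ⟨n₀, fun n hn N hN hlog => ?_⟩
  obtain ⟨typ_n, cond_n, rate_n⟩ := hn₀ n hn
  have : NeZero N := ⟨by omega⟩
  exact one_sub_le_sum_filter_isDecodable_tensorProd hq hqs h_decomp avg_decomp hε typ_n
    cond_n (by linarith [rate_n N hN hlog])

open scoped Classical in
/-- the Holevo–Schumacher–Westmoreland random coding theorem with
i.i.d. codewords: for rates below the Holevo information, a random code admits a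
decoding sub-POVM with average success probability at least `1 − ε`, with
probability at least `1 − ε` over the choice of the code. -/
theorem hsw_random_coding {m d : ℕ}
    (W : Fin m → Matrix (Fin d) (Fin d) ℂ) (hW : ∀ j, IsDensityMatrix (W j))
    (q : Fin m → ℝ) (hq : ∀ j, 0 < q j) (hqs : ∑ j, q j = 1)
    (χ : ℝ)
    (hχ : χ = vnEntropy (∑ j, (q j : ℂ) • W j) - ∑ j, q j * vnEntropy (W j))
    (hχpos : 0 < χ)
    (ε δ : ℝ) (hε0 : 0 < ε) (hε1 : ε < 1) (hδ0 : 0 < δ) (hδ1 : δ < 1) (hδχ : δ < χ) :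
    ∃ n₀ : ℕ, ∀ n, n₀ ≤ n → ∀ N : ℕ, 1 ≤ N → Real.logb 2 N ≤ n * (χ - δ) →
      1 - ε ≤
        ∑ U ∈ Finset.univ.filter (fun U : Fin N → Fin n → Fin m =>
            ∃ D : Fin N → Matrix (Fin n → Fin d) (Fin n → Fin d) ℂ,
              (∀ i, (D i).PosSemidef) ∧ (1 - ∑ i, D i).PosSemidef ∧
              1 - ε ≤ (N : ℝ)⁻¹ * ∑ i, ((tensorWord W (U i) * D i).trace).re),
          ∏ i, ∏ t, q (U i t) := by
  subst hχ
  exact hsw_random_coding_general hW (fun j => (hq j).le) hqs hε0 hδ0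
end
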